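/- arXiv:2212.01273 — 3 statements merged into one kernel-verified Lean document; each statement's English description precedes it below -/
import Mathlib

section
/- Let g = s ⋉ h be a finite-dimensional perfect complex Lie algebra with Z(g) = 0 and simple Levi subalgebra s, whose radical h decomposes into exactly 3 simple s-modules satisfying the convention. Then g is not sympathetic (g admits a derivation that is not inner). -/
namespace Symp

variable (g : Type*) [LieRing g] [LieAlgebra ℂ g]

/-- A derivation of `g` is inner if it is given by the adjoint action of some element. -/
def IsInnerDer {g : Type*} [LieRing g] [LieAlgebra ℂ g] (D : LieDerivation ℂ g g) : Prop :=
  ∃ x : g, ∀ y : g, D y = ⁅x, y⁆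

/-- `g` is perfect: `[g,g] = g`. -/
def IsPerfectLie : Prop :=
  ⁅(⊤ : LieIdeal ℂ g), (⊤ : LieIdeal ℂ g)⁆ = ⊤

/-- A sympathetic Lie algebra: trivial centre, perfect, all derivations inner. -/
def IsSympathetic : Prop :=
  LieAlgebra.center ℂ g = ⊥ ∧ IsPerfectLie g ∧
    ∀ D : LieDerivation ℂ g g, IsInnerDer D

/-- `s` is a simple Levi subalgebra of `g`: it is a simple Lie algebra and a vector-space
complement to the radical. -/
def IsSimpleLevi (s : LieSubalgebra ℂ g) : Prop :=
  LieAlgebra.IsSimple ℂ s ∧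
    IsCompl s.toSubmodule (LieAlgebra.radical ℂ g).toSubmodule

/-- `s` is a Levi subalgebra of `g` isomorphic to `sl₂(ℂ)`. -/
def IsSl2Levi (s : LieSubalgebra ℂ g) : Prop :=
  Nonempty (s ≃ₗ⁅ℂ⁆ LieAlgebra.SpecialLinear.sl (Fin 2) ℂ) ∧
    IsCompl s.toSubmodule (LieAlgebra.radical ℂ g).toSubmodule

/-- The subspace spanned by all brackets `⁅x, y⁆` with `x ∈ A`, `y ∈ B`. -/
def lieSpan2 (A B : Submodule ℂ g) : Submodule ℂ g :=
  Submodule.span ℂ {z : g | ∃ x ∈ A, ∃ y ∈ B, z = ⁅x, y⁆}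

/-- A subspace of `g` invariant under the bracket action of the subalgebra `s`. -/
def Invariant (s : LieSubalgebra ℂ g) (W : Submodule ℂ g) : Prop :=
  ∀ x ∈ s, ∀ w ∈ W, ⁅x, w⁆ ∈ W

/-- `V` is an irreducible `s`-submodule of `g`. -/
def IsIrreducibleSMod (s : LieSubalgebra ℂ g) (V : Submodule ℂ g) : Prop :=
  V ≠ ⊥ ∧ Invariant g s V ∧
    ∀ W : Submodule ℂ g, W ≤ V → Invariant g s W → W = ⊥ ∨ W = V

/-- The family `V` is a decomposition of the radical of `g` into irreducible `s`-modules. -/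
def IsDecomp (s : LieSubalgebra ℂ g) {k : ℕ} (V : Fin k → Submodule ℂ g) : Prop :=
  (∀ i, IsIrreducibleSMod g s (V i)) ∧ iSupIndep V ∧
    (⨆ i, V i) = (LieAlgebra.radical ℂ g).toSubmodule

/-- The convention: any nonzero bracket of two of the modules equals one of them,
for a unique index. -/
def Convention {k : ℕ} (V : Fin k → Submodule ℂ g) : Prop :=
  ∀ i j, lieSpan2 g (V i) (V j) ≠ ⊥ → ∃! q, lieSpan2 g (V i) (V j) = V q

/-- The centre `Z(h)` of the radical `h = Rad(g)`, as a subspace of `g`. -/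
def centerRad : Submodule ℂ g where
  carrier := {x | x ∈ LieAlgebra.radical ℂ g ∧ ∀ y ∈ LieAlgebra.radical ℂ g, ⁅x, y⁆ = 0}
  add_mem' := by
    rintro a b ⟨ha, ha'⟩ ⟨hb, hb'⟩
    exact ⟨add_mem ha hb, fun y hy => by rw [add_lie, ha' y hy, hb' y hy, add_zero]⟩
  zero_mem' := ⟨zero_mem _, fun y _ => zero_lie y⟩
  smul_mem' := by
    rintro c a ⟨ha, ha'⟩
    exact ⟨SMulMemClass.smul_mem c ha, fun y hy => by rw [smul_lie, ha' y hy, smul_zero]⟩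

/-- The derived subalgebra `[h,h]` of the radical `h = Rad(g)`, as a subspace of `g`. -/
def derivedRad : Submodule ℂ g :=
  lieSpan2 g (LieAlgebra.radical ℂ g).toSubmodule (LieAlgebra.radical ℂ g).toSubmodule

end Symp

/-!
Let `I = Rad g`. As `g` is perfect, every element acts with trace zero on every module, so by Lie's
theorem `I` kills the irreducible modules and hence acts nilpotently on all modules. This orders
the three summands so that each bracket `[V i, V j] = V q` moves strictly upwards. With only three
summands, the resulting equations `w i + w j = w q` have a solution in positive integers, because
the one contradictory system, `[A, A] = B` and `[A, B] = [B, B] = C`, would give `C ≤ [A, C]` by the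
Jacobi identity. Scaling `V i` by `w i` and `s` by `0` is then a derivation of positive trace,
whereas inner derivations of `g` have trace zero.
-/

namespace SympatheticLie

open LieModule

section BracketSpan

variable {R L M : Type*} [CommRing R] [LieRing L] [LieAlgebra R L]
  [AddCommGroup M] [Module R M] [LieRingModule L M] [LieModule R L M]

/-- The span `[A, N]` of all brackets `⁅x, m⁆` with `x ∈ A` and `m ∈ N`. Unlike Mathlib's
`⁅I, N⁆`, it does not require `A` to be an ideal or `N` to be a Lie submodule. -/
def bracketSpan (A : Submodule R L) (N : Submodule R M) : Submodule R M :=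
  Submodule.map₂ (toEnd R L M : L →ₗ[R] Module.End R M) A N

theorem lie_mem_bracketSpan {A : Submodule R L} {N : Submodule R M} {x : L} {m : M}
    (hx : x ∈ A) (hm : m ∈ N) : ⁅x, m⁆ ∈ bracketSpan A N :=
  Submodule.apply_mem_map₂ _ hx hm

theorem bracketSpan_le {A : Submodule R L} {N P : Submodule R M} :
    bracketSpan A N ≤ P ↔ ∀ x ∈ A, ∀ m ∈ N, ⁅x, m⁆ ∈ P :=
  Submodule.map₂_le

theorem bracketSpan_comm (A B : Submodule R L) : bracketSpan A B = bracketSpan B A := by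
  have le_swap (A B : Submodule R L) : bracketSpan A B ≤ bracketSpan B A :=
    bracketSpan_le.2 fun x hx y hy => by
      rw [← lie_skew]
      exact neg_mem (lie_mem_bracketSpan hy hx)
  exact le_antisymm (le_swap A B) (le_swap B A)

theorem bracketSpan_bracketSpan_le (A B : Submodule R L) (N : Submodule R M) :
    bracketSpan (bracketSpan A B) N ≤
      bracketSpan A (bracketSpan B N) ⊔ bracketSpan B (bracketSpan A N) := by
  refine bracketSpan_le.2 fun z hz m hm => ?_
  suffices bracketSpan A B ≤ (bracketSpan A (bracketSpan B N) ⊔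
      bracketSpan B (bracketSpan A N)).comap ((toEnd R L M : L →ₗ[R] Module.End R M).flip m) from
    this hz
  refine bracketSpan_le.2 fun x hx y hy => ?_
  change ⁅⁅x, y⁆, m⁆ ∈ bracketSpan A (bracketSpan B N) ⊔ bracketSpan B (bracketSpan A N)
  rw [lie_lie]
  exact sub_mem
    (Submodule.mem_sup_left (lie_mem_bracketSpan hx (lie_mem_bracketSpan hy hm)))
    (Submodule.mem_sup_right (lie_mem_bracketSpan hy (lie_mem_bracketSpan hx hm)))

end BracketSpan

section NilpotentIdeal

variable {R L M : Type*} [CommRing R] [LieRing L] [LieAlgebra R L]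
  [AddCommGroup M] [Module R M] [LieRingModule L M] {I : LieIdeal R L}

theorem lcs_antitone : Antitone (I.lcs M) :=
  antitone_nat_of_succ_le fun k => by
    rw [LieIdeal.lcs_succ]
    exact LieSubmodule.lie_le_right _ _

variable [LieModule R L M]

theorem isNilpotent_iff_exists_lcs_eq_bot :
    LieModule.IsNilpotent I M ↔ ∃ k, I.lcs M k = ⊥ := by
  simp only [LieModule.isNilpotent_iff R, ← LieSubmodule.toSubmodule_eq_bot, LieIdeal.coe_lcs_eq]

theorem bracketSpan_le_lcs_succ {A : Submodule R L} {N : Submodule R M} {k : ℕ}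
    (hA : A ≤ I.toSubmodule) (hN : N ≤ (I.lcs M k).toSubmodule) :
    bracketSpan A N ≤ (I.lcs M (k + 1)).toSubmodule :=
  bracketSpan_le.2 fun x hx m hm => by
    rw [LieIdeal.lcs_succ]
    exact LieSubmodule.lie_mem_lie (hA hx) (hN hm)

theorem eq_bot_of_le_bracketSpan [LieModule.IsNilpotent I M] {A : Submodule R L}
    {N : Submodule R M} (hA : A ≤ I.toSubmodule) (hN : N ≤ bracketSpan A N) : N = ⊥ := by
  obtain ⟨k, hk⟩ := isNilpotent_iff_exists_lcs_eq_bot.1 ‹LieModule.IsNilpotent I M›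
  have le_lcs (n : ℕ) : N ≤ (I.lcs M n).toSubmodule := by
    induction n with
    | zero => exact le_top
    | succ n ih => exact hN.trans (bracketSpan_le_lcs_succ hA ih)
  simpa [hk] using le_lcs k

theorem exists_le_lcs_and_not_le_lcs_succ [LieModule.IsNilpotent I M] {N : Submodule R M}
    (hN : N ≠ ⊥) :
    ∃ k, N ≤ (I.lcs M k).toSubmodule ∧ ¬ N ≤ (I.lcs M (k + 1)).toSubmodule := by
  obtain ⟨k, hk⟩ := isNilpotent_iff_exists_lcs_eq_bot.1 ‹LieModule.IsNilpotent I M›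
  simpa using Nat.exists_not_and_succ_of_not_zero_of_exists
    (p := fun n => ¬ N ≤ (I.lcs M n).toSubmodule) (by simp) ⟨k, by simpa [hk] using hN⟩

theorem exists_rank_lt_of_bracketSpan_eq [LieModule.IsNilpotent I L] {ι : Type*}
    {V : ι → Submodule R L} (hne : ∀ i, V i ≠ ⊥) (hV : ∀ i, V i ≤ I.toSubmodule) :
    ∃ r : ι → ℕ, ∀ i j q, bracketSpan (V i) (V j) = V q → r i < r q := by
  choose r hr hr' using fun i => exists_le_lcs_and_not_le_lcs_succ (I := I) (hne i)
  refine ⟨r, fun i j q hq => lt_of_not_ge fun hle => hr' q ?_⟩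
  calc V q = bracketSpan (V j) (V i) := by rw [← hq, bracketSpan_comm]
    _ ≤ (I.lcs L (r i + 1)).toSubmodule := bracketSpan_le_lcs_succ (hV j) (hr i)
    _ ≤ (I.lcs L (r q + 1)).toSubmodule := lcs_antitone (Nat.succ_le_succ hle)

theorem bracketSpan_self_ne_of_isNilpotent [LieModule.IsNilpotent I L] {A B C : Submodule R L}
    (hA : A ≤ I.toSubmodule) (hC : C ≠ ⊥) (hAA : bracketSpan A A = B)
    (hAB : bracketSpan A B = C) : bracketSpan B B ≠ C := by
  intro hBB
  refine hC (eq_bot_of_le_bracketSpan hA ?_)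
  calc C = bracketSpan (bracketSpan A A) B := by rw [hAA, hBB]
    _ ≤ bracketSpan A (bracketSpan A B) ⊔ bracketSpan A (bracketSpan A B) :=
      bracketSpan_bracketSpan_le A A B
    _ = bracketSpan A C := by rw [sup_idem, hAB]

end NilpotentIdeal

section Weights

variable {P : Fin 3 → Fin 3 → Fin 3 → Prop}

theorem exists_pos_weight_of_lt (hsymm : ∀ i j q, P i j q → P j i q)
    (huniq : ∀ i j q q', P i j q → P i j q' → q = q') (hlt : ∀ i j q, P i j q → i < q)
    (hnot : ∀ a b c, P a a b → P a b c → ¬ P b b c) :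
    ∃ w : Fin 3 → ℕ, (∀ i, 0 < w i) ∧ ∀ i j q, P i j q → w i + w j = w q := by
  have of_increasing (w : Fin 3 → ℕ) (h₀₀₁ : P 0 0 1 → w 0 + w 0 = w 1)
      (h₀₀₂ : P 0 0 2 → w 0 + w 0 = w 2) (h₀₁₂ : P 0 1 2 → w 0 + w 1 = w 2)
      (h₁₁₂ : P 1 1 2 → w 1 + w 1 = w 2) (i j q : Fin 3) (h : P i j q) : w i + w j = w q := by
    have hi := hlt i j q h
    have hj := hlt j i q (hsymm i j q h)
    have h₁₀₂ : P 1 0 2 → w 1 + w 0 = w 2 := fun h => add_comm (w 0) _ ▸ h₀₁₂ (hsymm _ _ _ h)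
    fin_cases i <;> fin_cases j <;> fin_cases q <;> simp_all
  by_cases h₀₀₁ : P 0 0 1
  · have h₀₀₂ : ¬ P 0 0 2 := fun h => absurd (huniq _ _ _ _ h₀₀₁ h) (by decide)
    by_cases h₀₁₂ : P 0 1 2
    · have h₁₁₂ : ¬ P 1 1 2 := hnot _ _ _ h₀₀₁ h₀₁₂
      exact ⟨![1, 2, 3], by decide, of_increasing _ (by simp) (by simp [h₀₀₂]) (by simp)
        (by simp [h₁₁₂])⟩
    · exact ⟨![1, 2, 4], by decide, of_increasing _ (by simp) (by simp [h₀₀₂]) (by simp [h₀₁₂])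
        (by simp)⟩
  · exact ⟨![1, 1, 2], by decide, of_increasing _ (by simp [h₀₀₁]) (by simp) (by simp) (by simp)⟩

theorem exists_pos_weight_of_rank_lt {r : Fin 3 → ℕ} (hsymm : ∀ i j q, P i j q → P j i q)
    (huniq : ∀ i j q q', P i j q → P i j q' → q = q') (hr : ∀ i j q, P i j q → r i < r q)
    (hnot : ∀ a b c, P a a b → P a b c → ¬ P b b c) :
    ∃ w : Fin 3 → ℕ, (∀ i, 0 < w i) ∧ ∀ i j q, P i j q → w i + w j = w q := by
  let σ := Tuple.sort r
  obtain ⟨w, hpos, hw⟩ := exists_pos_weight_of_lt (P := fun i j q => P (σ i) (σ j) (σ q))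
    (fun _ _ _ => hsymm _ _ _) (fun _ _ _ _ h h' => σ.injective (huniq _ _ _ _ h h'))
    (fun _ _ _ h => (Tuple.monotone_sort r).reflect_lt (hr _ _ _ h)) (fun _ _ _ => hnot _ _ _)
  exact ⟨w ∘ σ.symm, fun i => hpos _, fun i j q h => hw _ _ _ (by simpa using h)⟩

theorem exists_pos_weight_of_bracketSpan_eq {R L : Type*} [CommRing R] [LieRing L]
    [LieAlgebra R L] {I : LieIdeal R L} [LieModule.IsNilpotent I L] {V : Fin 3 → Submodule R L}
    (hne : ∀ i, V i ≠ ⊥) (hind : iSupIndep V) (hV : ∀ i, V i ≤ I.toSubmodule) :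
    ∃ w : Fin 3 → ℕ, (∀ i, 0 < w i) ∧
      ∀ i j q, bracketSpan (V i) (V j) = V q → w i + w j = w q := by
  obtain ⟨r, hr⟩ := exists_rank_lt_of_bracketSpan_eq hne hV
  exact exists_pos_weight_of_rank_lt
    (fun i j q h => (bracketSpan_comm _ _).trans h)
    (fun i j q q' h h' => hind.injective hne (h.symm.trans h')) hr
    (fun a b c => bracketSpan_self_ne_of_isNilpotent (hV a) (hne c))

end Weights

section ScalingDerivation

variable {ι R : Type*} [CommRing R]

theorem exists_linearMap_eq_smul_of_isInternal [DecidableEq ι] {M : Type*} [AddCommGroup M]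
    [Module R M] {U : ι → Submodule R M} (hU : DirectSum.IsInternal U) (d : ι → R) :
    ∃ f : Module.End R M, ∀ i, ∀ x ∈ U i, f x = d i • x := by
  let e := LinearEquiv.ofBijective (DirectSum.coeLinearMap U) hU
  refine ⟨DirectSum.toModule R ι M (fun i => d i • (U i).subtype) ∘ₗ e.symm, fun i x hx => ?_⟩
  have he : e.symm x = DirectSum.lof R ι (fun i => U i) i ⟨x, hx⟩ := by
    rw [LinearEquiv.symm_apply_eq]
    exact (DirectSum.coeLinearMap_lof U i ⟨x, hx⟩).symm
  simp [he]

theorem trace_eq_sum_of_eq_smul [DecidableEq ι] [Fintype ι] {M : Type*} [AddCommGroup M]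
    [Module R M] {U : ι → Submodule R M} [∀ i, Module.Finite R (U i)]
    [∀ i, Module.Free R (U i)] (hU : DirectSum.IsInternal U) {d : ι → R} {f : Module.End R M}
    (hf : ∀ i, ∀ x ∈ U i, f x = d i • x) :
    LinearMap.trace R M f = ∑ i, d i * Module.finrank R (U i) := by
  have mapsTo (i : ι) : Set.MapsTo f (U i) (U i) := fun x hx => by
    rw [hf i x hx]
    exact (U i).smul_mem _ hx
  rw [LinearMap.trace_eq_sum_trace_restrict hU mapsTo]
  refine Finset.sum_congr rfl fun i _ => ?_
  have restrict_eq : f.restrict (mapsTo i) = d i • LinearMap.id :=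
    LinearMap.ext fun x => Subtype.ext (hf i x x.2)
  rw [restrict_eq, map_smul, LinearMap.trace_id, smul_eq_mul]

theorem exists_lieDerivation_eq_smul [DecidableEq ι] {L : Type*} [LieRing L] [LieAlgebra R L]
    {U : ι → Submodule R L} (hU : DirectSum.IsInternal U) {d : ι → R}
    (hd : ∀ i j, bracketSpan (U i) (U j) ≤ ⨆ q, ⨆ _ : d i + d j = d q, U q) :
    ∃ D : LieDerivation R L L, ∀ i, ∀ x ∈ U i, D x = d i • x := by
  obtain ⟨f, hf⟩ := exists_linearMap_eq_smul_of_isInternal hU d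
  have lie_eq_smul (i j : ι) : bracketSpan (U i) (U j) ≤ f.eigenspace (d i + d j) :=
    (hd i j).trans <| iSup₂_le fun q hq x hx => by
      rw [Module.End.mem_eigenspace_iff, hf q x hx, hq]
  have mem_iSup (x : L) : x ∈ ⨆ i, U i := hU.submodule_iSup_eq_top ▸ Submodule.mem_top
  have leibniz (x y : L) : f ⁅x, y⁆ = ⁅x, f y⁆ - ⁅y, f x⁆ := by
    induction mem_iSup x using Submodule.iSup_induction' with
    | mem i x hx =>
      induction mem_iSup y using Submodule.iSup_induction' with
      | mem j y hy =>
        rw [Module.End.mem_eigenspace_iff.1 (lie_eq_smul i j (lie_mem_bracketSpan hx hy)),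
          hf i x hx, hf j y hy, lie_smul, lie_smul, ← lie_skew x y, add_smul]
        module
      | zero => simp
      | add y y' _ _ ih ih' =>
        simp only [lie_add, add_lie, map_add, ih, ih']
        abel
    | zero => simp
    | add x x' _ _ ih ih' =>
      simp only [lie_add, add_lie, map_add, ih, ih']
      abel
  exact ⟨⟨f, leibniz⟩, hf⟩

theorem isInternal_option_elim [DecidableEq ι] {M : Type*} [AddCommGroup M] [Module R M]
    {S : Submodule R M} {V : ι → Submodule R M} (hind : iSupIndep V) (hS : IsCompl S (⨆ i, V i)) :
    DirectSum.IsInternal fun o : Option ι => o.elim S V := by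
  refine (DirectSum.isInternal_submodule_iff_iSupIndep_and_iSup_eq_top _).2 ⟨?_, ?_⟩
  · rintro (_ | i)
    · refine hS.disjoint.mono_right (iSup₂_le ?_)
      rintro (_ | j) hj
      · exact absurd rfl hj
      · exact le_iSup V j
    · have hsplit : V i ⊔ ⨆ (j) (_ : j ≠ i), V j = ⨆ j, V j := (iSup_split_single V i).symm
      have hdisj : Disjoint (V i) ((⨆ (j) (_ : j ≠ i), V j) ⊔ S) :=
        (hind i).disjoint_sup_right_of_disjoint_sup_left (hsplit ▸ hS.disjoint.symm)
      refine hdisj.mono_right (iSup₂_le ?_)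
      rintro (_ | j) hj
      · exact le_sup_right
      · have hji : j ≠ i := by simpa using hj
        exact (le_iSup₂ (f := fun j (_ : j ≠ i) => V j) j hji).trans le_sup_left
  · rw [iSup_option]
    exact hS.sup_eq_top

end ScalingDerivation

section Perfect

variable {R L : Type*} [CommRing R] [LieRing L] [LieAlgebra R L]

theorem trace_toEnd_eq_zero_of_perfect
    (hL : ⁅(⊤ : LieIdeal R L), (⊤ : LieIdeal R L)⁆ = ⊤) (M : Type*) [AddCommGroup M] [Module R M]
    [LieRingModule L M] [LieModule R L M] (x : L) :
    LinearMap.trace R M (toEnd R L M x) = 0 := by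
  have hx : x ∈ (⁅(⊤ : LieIdeal R L), (⊤ : LieIdeal R L)⁆).toSubmodule := by
    rw [hL]
    exact Submodule.mem_top
  rw [LieSubmodule.lieIdeal_oper_eq_linear_span'] at hx
  induction hx using Submodule.span_induction with
  | mem _ h => obtain ⟨y, -, z, -, rfl⟩ := h; simp
  | zero => simp
  | add y z _ _ hy hz => simp [hy, hz]
  | smul t y _ hy => simp [hy]

theorem notMem_range_ad_of_trace_ne_zero (hL : ⁅(⊤ : LieIdeal R L), (⊤ : LieIdeal R L)⁆ = ⊤)
    {D : LieDerivation R L L} (hD : LinearMap.trace R L D ≠ 0) :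
    D ∉ (LieDerivation.ad R L).range := by
  rintro ⟨x, rfl⟩
  refine hD (Eq.trans ?_ (trace_toEnd_eq_zero_of_perfect hL L x))
  exact congrArg _ (LieDerivation.coe_ad_apply_eq_ad_apply x)

end Perfect

section SolvableIdeal

theorem isIrreducible_quotient_of_isCoatom {R L M : Type*} [CommRing R] [LieRing L]
    [LieAlgebra R L] [AddCommGroup M] [Module R M] [LieRingModule L M] [LieModule R L M]
    {N : LieSubmodule R L M} (hN : IsCoatom N) : LieModule.IsIrreducible R L (M ⧸ N) := by
  have : Nontrivial (M ⧸ N) := Submodule.Quotient.nontrivial_iff.2 (by simpa using hN.1)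
  refine LieModule.IsIrreducible.mk fun Q hQ => ?_
  let π := LieSubmodule.Quotient.mk' N
  have le_comap : N ≤ Q.comap π := fun n hn => by
    rw [LieSubmodule.mem_comap, (LieSubmodule.Quotient.mk_eq_zero (N := N)).2 hn]
    exact Q.zero_mem
  have map_comap : (Q.comap π).map π = Q :=
    LieSubmodule.map_comap_eq _ _ (by simp [π])
  have comap_eq_top : Q.comap π = ⊤ := (hN.le_iff.1 le_comap).resolve_right fun h => hQ <| by
    rw [← map_comap, h]
    exact (LieSubmodule.Quotient.map_mk'_eq_bot_le N N).2 le_rfl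
  rw [← map_comap, comap_eq_top, LieModuleHom.map_top, LieSubmodule.Quotient.range_mk']

variable {K L : Type*} [Field K] [CharZero K] [IsAlgClosed K] [LieRing L] [LieAlgebra K L]
  {I : LieIdeal K L} [LieAlgebra.IsSolvable I]

theorem lie_eq_zero_of_isIrreducible_of_perfect
    (hL : ⁅(⊤ : LieIdeal K L), (⊤ : LieIdeal K L)⁆ = ⊤)
    {M : Type*} [AddCommGroup M] [Module K M] [LieRingModule L M] [LieModule K L M]
    [FiniteDimensional K M] [LieModule.IsIrreducible K L M] {x : L} (hx : x ∈ I) (m : M) :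
    ⁅x, m⁆ = 0 := by
  have := nontrivial_of_isIrreducible K L M
  obtain ⟨χ, hχ⟩ : ∃ χ : Module.Dual K I, Nontrivial (weightSpace M χ) :=
    exists_nontrivial_weightSpace_of_isSolvable K I M
  let N : LieSubmodule K L M := weightSpaceOfIsLieTower K M χ
  have : Nontrivial N := hχ
  have hN : N = ⊤ := N.eq_top_of_isIrreducible K L M
  have lie_eq_smul (m : M) : ∀ y (hy : y ∈ I), ⁅y, m⁆ = χ ⟨y, hy⟩ • m := by
    simpa [N, weightSpaceOfIsLieTower, mem_weightSpace] using (hN ▸ LieSubmodule.mem_top m : m ∈ N)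
  have toEnd_eq : toEnd K L M x = χ ⟨x, hx⟩ • LinearMap.id :=
    LinearMap.ext fun m => lie_eq_smul m x hx
  have trace_eq_zero := trace_toEnd_eq_zero_of_perfect hL M x
  rw [toEnd_eq, map_smul, LinearMap.trace_id, smul_eq_mul, mul_eq_zero, Nat.cast_eq_zero]
    at trace_eq_zero
  rw [lie_eq_smul m x hx, trace_eq_zero.resolve_right Module.finrank_pos.ne', zero_smul]

theorem lie_top_ne_top_of_perfect
    (hL : ⁅(⊤ : LieIdeal K L), (⊤ : LieIdeal K L)⁆ = ⊤) (M : Type*) [AddCommGroup M] [Module K M]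
    [LieRingModule L M] [LieModule K L M] [FiniteDimensional K M] [Nontrivial M] :
    ⁅I, (⊤ : LieSubmodule K L M)⁆ ≠ ⊤ := by
  obtain ⟨N, hN⟩ := IsCoatomic.exists_coatom (LieSubmodule K L M)
  have := isIrreducible_quotient_of_isCoatom hN
  refine ne_top_of_le_ne_top hN.1 ((LieSubmodule.lie_le_iff ..).2 fun x hx m _ => ?_)
  rw [← LieSubmodule.Quotient.mk_eq_zero]
  exact lie_eq_zero_of_isIrreducible_of_perfect hL hx (LieSubmodule.Quotient.mk' N m)

theorem eq_bot_of_lie_eq_self_of_perfect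
    (hL : ⁅(⊤ : LieIdeal K L), (⊤ : LieIdeal K L)⁆ = ⊤) {M : Type*} [AddCommGroup M] [Module K M]
    [LieRingModule L M] [LieModule K L M] [FiniteDimensional K M]
    {N : LieSubmodule K L M} (hN : ⁅I, N⁆ = N) : N = ⊥ := by
  by_contra hne
  have := (LieSubmodule.nontrivial_iff_ne_bot K L M).2 hne
  refine lie_top_ne_top_of_perfect (I := I) hL N
    (LieSubmodule.map_injective_of_injective (f := N.incl) Subtype.val_injective ?_)
  rw [LieSubmodule.map_bracket_eq]
  simpa using hN

theorem isNilpotent_of_isSolvable_of_perfect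
    (hL : ⁅(⊤ : LieIdeal K L), (⊤ : LieIdeal K L)⁆ = ⊤) (M : Type*) [AddCommGroup M] [Module K M]
    [LieRingModule L M] [LieModule K L M] [FiniteDimensional K M] :
    LieModule.IsNilpotent I M := by
  have := LieSubmodule.wellFoundedLT_of_isArtinian K L M
  obtain ⟨k, hk⟩ := WellFoundedLT.antitone_chain_condition (lcs_antitone (I := I) (M := M))
  refine isNilpotent_iff_exists_lcs_eq_bot.2 ⟨k, eq_bot_of_lie_eq_self_of_perfect (I := I) hL ?_⟩
  rw [← LieIdeal.lcs_succ]
  exact (hk (k + 1) k.le_succ).symm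

end SolvableIdeal

section Complement

theorem exists_lieDerivation_eq_smul_of_isCompl {ι R L : Type*} [CommRing R] [LieRing L]
    [LieAlgebra R L] {s : LieSubalgebra R L} {V : ι → Submodule R L} (hind : iSupIndep V)
    (hs : IsCompl s.toSubmodule (⨆ i, V i))
    (hinv : ∀ i, bracketSpan s.toSubmodule (V i) ≤ V i) {d : ι → R}
    (hd : ∀ i j, bracketSpan (V i) (V j) ≤ ⨆ q, ⨆ _ : d i + d j = d q, V q) :
    ∃ D : LieDerivation R L L, (∀ x ∈ s, D x = 0) ∧ ∀ i, ∀ x ∈ V i, D x = d i • x := by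
  classical
  let U (o : Option ι) : Submodule R L := o.elim s.toSubmodule V
  let d' (o : Option ι) : R := o.elim 0 d
  have le_of_eq {o o' q : Option ι} (h : d' o + d' o' = d' q) :
      U q ≤ ⨆ q, ⨆ _ : d' o + d' o' = d' q, U q := le_iSup₂_of_le q h le_rfl
  obtain ⟨D, hD⟩ := exists_lieDerivation_eq_smul (isInternal_option_elim hind hs) (d := d') <| by
    rintro (_ | i) (_ | j)
    · exact (bracketSpan_le.2 fun x hx y hy => s.lie_mem hx hy).trans
        (le_of_eq (q := none) (add_zero 0))
    · exact (hinv j).trans (le_of_eq (q := some j) (zero_add _))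
    · exact (bracketSpan_comm _ _).trans_le <| (hinv i).trans (le_of_eq (q := some i) (add_zero _))
    · exact (hd i j).trans (iSup₂_le fun q hq => le_of_eq (q := some q) hq)
  exact ⟨D, fun x hx => by simpa [d'] using hD none x hx, fun i => hD (some i)⟩

theorem trace_eq_sum_of_isCompl {ι K M : Type*} [Field K] [AddCommGroup M] [Module K M]
    [FiniteDimensional K M] [Fintype ι] {S : Submodule K M} {V : ι → Submodule K M}
    (hind : iSupIndep V) (hS : IsCompl S (⨆ i, V i)) {f : Module.End K M} {d : ι → K}
    (hfS : ∀ x ∈ S, f x = 0) (hfV : ∀ i, ∀ x ∈ V i, f x = d i • x) :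
    LinearMap.trace K M f = ∑ i, d i * Module.finrank K (V i) := by
  classical
  have hf : ∀ o : Option ι, ∀ x ∈ o.elim S V, f x = (o.elim 0 d : K) • x := by
    rintro (_ | i) x hx
    · simpa using hfS x hx
    · exact hfV i x hx
  calc LinearMap.trace K M f
    _ = 0 * Module.finrank K S + ∑ i, d i * Module.finrank K (V i) :=
      (trace_eq_sum_of_eq_smul (isInternal_option_elim hind hS) hf).trans (Fintype.sum_option _)
    _ = ∑ i, d i * Module.finrank K (V i) := by rw [zero_mul, zero_add]

theorem exists_lieDerivation_trace_ne_zero {K L : Type*} [Field K] [CharZero K] [LieRing L]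
    [LieAlgebra K L] [FiniteDimensional K L] {I : LieIdeal K L} [LieModule.IsNilpotent I L]
    {s : LieSubalgebra K L} (hs : IsCompl s.toSubmodule I.toSubmodule)
    {V : Fin 3 → Submodule K L} (hne : ∀ i, V i ≠ ⊥)
    (hinv : ∀ i, bracketSpan s.toSubmodule (V i) ≤ V i) (hind : iSupIndep V)
    (hV : ⨆ i, V i = I.toSubmodule)
    (hconv : ∀ i j, bracketSpan (V i) (V j) ≠ ⊥ → ∃ q, bracketSpan (V i) (V j) = V q) :
    ∃ D : LieDerivation K L L, LinearMap.trace K L D ≠ 0 := by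
  obtain ⟨w, hw_pos, hw⟩ := exists_pos_weight_of_bracketSpan_eq hne hind fun i => hV ▸ le_iSup V i
  rw [← hV] at hs
  have hd (i j : Fin 3) :
      bracketSpan (V i) (V j) ≤ ⨆ q, ⨆ _ : (w i + w j : K) = w q, V q := by
    by_cases hbot : bracketSpan (V i) (V j) = ⊥
    · exact hbot.trans_le bot_le
    · obtain ⟨q, hq⟩ := hconv i j hbot
      exact hq.trans_le (le_iSup₂_of_le q (by exact_mod_cast hw i j q hq) le_rfl)
  obtain ⟨D, hDs, hDV⟩ :=
    exists_lieDerivation_eq_smul_of_isCompl hind hs hinv (d := fun i => (w i : K)) hd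
  have finrank_pos (i : Fin 3) : 0 < Module.finrank K (V i) :=
    Nat.pos_of_ne_zero fun h => hne i (Submodule.finrank_eq_zero.1 h)
  have sum_pos : 0 < ∑ i, w i * Module.finrank K (V i) :=
    Finset.sum_pos (fun i _ => Nat.mul_pos (hw_pos i) (finrank_pos i)) Finset.univ_nonempty
  refine ⟨D, ?_⟩
  rw [trace_eq_sum_of_isCompl hind hs hDs hDV]
  exact_mod_cast sum_pos.ne'

end Complement

section Comparison

variable {g : Type*} [LieRing g] [LieAlgebra ℂ g]

theorem lieSpan2_eq_bracketSpan (A B : Submodule ℂ g) :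
    Symp.lieSpan2 g A B = bracketSpan A B := by
  refine le_antisymm (Submodule.span_le.2 ?_)
    (bracketSpan_le.2 fun x hx y hy => Submodule.subset_span ⟨x, hx, y, hy, rfl⟩)
  rintro _ ⟨x, hx, y, hy, rfl⟩
  exact lie_mem_bracketSpan hx hy

theorem mem_range_ad_of_isInnerDer {D : LieDerivation ℂ g g} (hD : Symp.IsInnerDer D) :
    D ∈ (LieDerivation.ad ℂ g).range := by
  obtain ⟨x, hx⟩ := hD
  refine ⟨x, LieDerivation.ext fun y => ?_⟩
  exact (LieDerivation.ad_apply_apply ℂ g x y).trans (hx y).symm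

end Comparison

end SympatheticLie

theorem stmt5_general {K L : Type*} [Field K] [CharZero K] [IsAlgClosed K] [LieRing L]
    [LieAlgebra K L] [FiniteDimensional K L]
    (hL : ⁅(⊤ : LieIdeal K L), (⊤ : LieIdeal K L)⁆ = ⊤)
    {I : LieIdeal K L} [LieAlgebra.IsSolvable I]
    {s : LieSubalgebra K L} (hs : IsCompl s.toSubmodule I.toSubmodule)
    {V : Fin 3 → Submodule K L} (hne : ∀ i, V i ≠ ⊥)
    (hinv : ∀ i, ∀ x ∈ s, ∀ v ∈ V i, ⁅x, v⁆ ∈ V i) (hind : iSupIndep V)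
    (hV : ⨆ i, V i = I.toSubmodule)
    (hconv : ∀ i j, SympatheticLie.bracketSpan (V i) (V j) ≠ ⊥ →
      ∃ q, SympatheticLie.bracketSpan (V i) (V j) = V q) :
    ∃ D : LieDerivation K L L, D ∉ (LieDerivation.ad K L).range := by
  have : LieModule.IsNilpotent I L := SympatheticLie.isNilpotent_of_isSolvable_of_perfect hL L
  obtain ⟨D, hD⟩ := SympatheticLie.exists_lieDerivation_trace_ne_zero hs hne
    (fun i => SympatheticLie.bracketSpan_le.2 (hinv i)) hind hV hconv
  exact ⟨D, SympatheticLie.notMem_range_ad_of_trace_ne_zero hL hD⟩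

/-- perfect, centreless, radical decomposing into exactly 3 simple modules
(with the convention) implies not sympathetic. -/
theorem stmt5 (g : Type*) [LieRing g] [LieAlgebra ℂ g] [FiniteDimensional ℂ g]
    (hperf : Symp.IsPerfectLie g)
    (hZg : LieAlgebra.center ℂ g = ⊥)
    (s : LieSubalgebra ℂ g) (hs : Symp.IsSimpleLevi g s)
    (V : Fin 3 → Submodule ℂ g) (hdec : Symp.IsDecomp g s V)
    (hconv : Symp.Convention g V) :
    (∃ D : LieDerivation ℂ g g, ¬ Symp.IsInnerDer D) ∧ ¬ Symp.IsSympathetic g := by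
  obtain ⟨D, hD⟩ := stmt5_general hperf hs.2 (fun i => (hdec.1 i).1) (fun i => (hdec.1 i).2.1)
    hdec.2.1 hdec.2.2 fun i j hij => by
      rw [← SympatheticLie.lieSpan2_eq_bracketSpan] at hij ⊢
      exact (hconv i j hij).exists
  have not_inner : ¬ Symp.IsInnerDer D := fun h => hD (SympatheticLie.mem_range_ad_of_isInnerDer h)
  exact ⟨⟨D, not_inner⟩, fun hg => not_inner (hg.2.2 D)⟩
end

section
/- Let g = s ⋉ h be a finite-dimensional perfect complex Lie algebra with simple Levi subalgebra s, whose radical h decomposes into 4 simple s-modules V_n, V_m, V_p, V_k with Z(h) = V_k and [h,h] = V_p ⊕ V_k, and whose bracket satisfies [V_n,V_n] = V_p, [V_n,V_p] = V_k, [V_m,V_m] = V_k, and all other brackets among the four modules are zero. Then g admits a diagonalizable derivation that is not inner; in particular g is not sympathetic. -/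
/-!
The bracket table is homogeneous for the degrees `2, 3, 4, 6` on `V_n, V_m, V_p, V_k` and `0` on
`s`, so `g` is a graded Lie algebra and multiplication by the degree is a diagonalizable
derivation `D`. Since no `V_i` has degree `0`, the kernel of `D` is exactly `s`. If `D = ad x`,
then `D x = ⁅x, x⁆ = 0` puts `x` in `s`, while `D = 0` on `s` says that `x` centralizes `s`; as `s`
has trivial centre, `x = 0` and `D = 0`, which is absurd because `s ≠ g`.
-/

open Module.End in
theorem isSemisimple_of_iSup_eigenspace_eq_top {K M : Type*} [Field K] [AddCommGroup M]
    [Module K M] {f : Module.End K M} (hf : ⨆ μ, f.eigenspace μ = ⊤) : f.IsSemisimple := by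
  have hinv := eigenspace_mem_invtSubmodule f
  let p (μ : K) : Submodule (Polynomial K) (Module.AEval' f) :=
    Module.AEval.mapSubmodule K M f ⟨f.eigenspace μ, hinv μ⟩
  have hp (μ : K) : IsSemisimpleModule (Polynomial K) (p μ) := by
    have hscalar : (μ • LinearMap.id : Module.End K (f.eigenspace μ)).IsSemisimple :=
      IsSemisimple_smul μ isSemisimple_id
    rw [← restrict_eigenspace f μ] at hscalar
    exact (Module.AEval.restrict_equiv_mapSubmodule f _ (hinv μ)).isSemisimpleModule_iff.1 hscalar
  have hle : ⨆ μ, f.eigenspace μ ≤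
      ((Module.AEval.mapSubmodule K M f).symm (⨆ μ, p μ) : Submodule K M) :=
    iSup_le fun μ _ hy => le_iSup p μ ((Module.AEval.mem_mapSubmodule_apply ..).2 hy)
  refine isSemisimpleModule_of_isSemisimpleModule_submodule' hp (eq_top_iff.2 fun x _ => ?_)
  have hx : (Module.AEval'.of f).symm x ∈ ⨆ μ, f.eigenspace μ := hf ▸ Submodule.mem_top
  exact hle hx

theorem iSupIndep_option_elim {ι α : Type*} [CompleteLattice α] [IsModularLattice α] {a : α}
    {f : ι → α} (hf : iSupIndep f) (ha : Disjoint a (⨆ i, f i)) :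
    iSupIndep fun o : Option ι => o.elim a f := by
  rintro (_ | i)
  · simpa [iSup_option] using ha
  · have hle : f i ⊔ ⨆ (j) (_ : j ≠ i), f j ≤ ⨆ j, f j :=
      sup_le (le_iSup f i) (iSup₂_le fun j _ => le_iSup f j)
    simpa [iSup_option, sup_comm] using
      (hf i).disjoint_sup_right_of_disjoint_sup_left (ha.symm.mono_left hle)

section DegreePart

variable {R M ι A : Type*}

/-- The component of degree `a` of the grading for which each `W i` is homogeneous of degree
`d i`. Distinct `W i` may share a degree, and a degree that is not attained has component `⊥`. -/
def degreePart [Semiring R] [AddCommMonoid M] [Module R M] (W : ι → Submodule R M) (d : ι → A)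
    (a : A) : Submodule R M :=
  ⨆ i ∈ d ⁻¹' {a}, W i

section Semiring

variable [Semiring R] [AddCommMonoid M] [Module R M] {W : ι → Submodule R M} {d : ι → A}

theorem le_degreePart (W : ι → Submodule R M) (d : ι → A) (i : ι) :
    W i ≤ degreePart W d (d i) :=
  le_iSup₂_of_le i rfl le_rfl

theorem iSup_degreePart : ⨆ a, degreePart W d a = ⨆ i, W i :=
  le_antisymm (iSup_le fun _ => iSup₂_le fun i _ => le_iSup W i)
    (iSup_le fun i => (le_degreePart W d i).trans (le_iSup _ _))

theorem degreePart_option_elim_zero [Zero A] (S : Submodule R M) (hd : ∀ i, d i ≠ 0) :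
    degreePart (fun o : Option ι => o.elim S W) (fun o => o.elim 0 d) 0 = S := by
  simp [degreePart, iSup_option, hd]

end Semiring

theorem iSupIndep_degreePart [Ring R] [AddCommGroup M] [Module R M] {W : ι → Submodule R M}
    {d : ι → A} (hW : iSupIndep W) : iSupIndep (degreePart W d) := by
  intro a
  have hdisj : Disjoint (d ⁻¹' {a}) (d ⁻¹' {a}ᶜ) := disjoint_compl_right.preimage d
  refine (hW.disjoint_biSup_biSup hdisj).mono_right ?_
  exact iSup₂_le fun b hb => iSup₂_le fun i (hi : d i = b) =>
    le_iSup₂_of_le i (show d i ≠ a from hi ▸ hb) le_rfl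

end DegreePart

section Bracket

variable {R L ι A : Type*} [CommRing R] [LieRing L] [LieAlgebra R L]
  {W : ι → Submodule R L} {d : ι → A}

/-- The bracket is additive in degrees when each `W i` is placed in degree `d i`. The `W i` need
neither be independent nor span `L`. -/
def IsBracketGraded [Add A] (W : ι → Submodule R L) (d : ι → A) : Prop :=
  ∀ i j, ∀ x ∈ W i, ∀ y ∈ W j, ⁅x, y⁆ ∈ degreePart W d (d i + d j)

theorem isBracketGraded_of_le [LinearOrder ι] [AddCommMonoid A]
    (h : ∀ i j, i ≤ j → ∀ x ∈ W i, ∀ y ∈ W j, ⁅x, y⁆ ∈ degreePart W d (d i + d j)) :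
    IsBracketGraded W d := by
  intro i j x hx y hy
  rcases le_total i j with hij | hji
  · exact h i j hij x hx y hy
  · rw [← lie_skew, add_comm]
    exact neg_mem (h j i hji y hy x hx)

theorem IsBracketGraded.option_elim [AddCommMonoid A] (hW : IsBracketGraded W d)
    (s : LieSubalgebra R L) (hs : ∀ i, ∀ x ∈ s, ∀ y ∈ W i, ⁅x, y⁆ ∈ W i) :
    IsBracketGraded (fun o : Option ι => o.elim s.toSubmodule W) (fun o => o.elim 0 d) := by
  have hle := le_degreePart (fun o : Option ι => o.elim s.toSubmodule W) (fun o => o.elim 0 d)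
  rintro (_ | i) (_ | j) x hx y hy
  · simpa using hle none (s.lie_mem hx hy)
  · simpa using hle (some j) (hs j x hx y hy)
  · rw [← lie_skew]
    simpa using neg_mem (hle (some i) (hs i y hy x hx))
  · refine (iSup₂_le fun k hk => ?_ : degreePart W d (d i + d j) ≤ _) (hW i j x hx y hy)
    exact le_iSup₂_of_le (some k) hk le_rfl

theorem IsBracketGraded.gradedBracket [Add A] (hW : IsBracketGraded W d) :
    SetLike.GradedBracket (degreePart W d) where
  bracket_mem a b x y hx hy := by
    have h := Submodule.apply_mem_map₂ (LieModule.toEnd R L L : L →ₗ[R] Module.End R L) hx hy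
    simp only [degreePart, Submodule.map₂_iSup_left, Submodule.map₂_iSup_right] at h
    refine (?_ : _ ≤ degreePart W d (a + b)) h
    refine iSup₂_le fun j hj => iSup₂_le fun i hi => ?_
    obtain rfl : d i = a := hi
    obtain rfl : d j = b := hj
    exact Submodule.map₂_le.2 (hW i j)

/-- The graded Lie algebra structure on `L` whose homogeneous components are the
`degreePart W d a`. It is an `abbrev` and not an instance because it depends on `W` and `d`. -/
noncomputable abbrev IsBracketGraded.gradedLieAlgebra [AddCommMonoid A] [DecidableEq A]
    (hW : IsBracketGraded W d) (hind : iSupIndep W) (htop : ⨆ i, W i = ⊤) :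
    GradedLieAlgebra (degreePart W d) :=
  { hW.gradedBracket,
    (DirectSum.isInternal_submodule_of_iSupIndep_of_iSup_eq_top (iSupIndep_degreePart hind)
      (iSup_degreePart.trans htop)).chooseDecomposition with }

end Bracket

section Derivation

open LieDerivation

theorem eigenspace_ofGrading {R L : Type*} [CommRing R] [IsDomain R] [DecidableEq R] [LieRing L]
    [LieAlgebra R L] [Module.IsTorsionFree R L] (ℒ : R → Submodule R L) [GradedLieAlgebra ℒ] :
    Module.End.eigenspace (ofGrading ℒ (AddMonoidHom.id R)).toLinearMap = ℒ := by
  have htop := (DirectSum.Decomposition.isInternal ℒ).submodule_iSup_eq_top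
  refine (((Module.End.eigenspaces_iSupIndep _).le_iff_eq_of_iSup_eq_top htop).1 ?_).symm
  exact fun c x hx => Module.End.mem_eigenspace_iff.2 (ofGrading_apply_apply ℒ _ hx)

theorem notMem_range_ad_of_ker_eq {R L : Type*} [CommRing R] [LieRing L] [LieAlgebra R L]
    {D : LieDerivation R L L} {s : LieSubalgebra R L}
    (hker : LinearMap.ker D.toLinearMap = s.toSubmodule)
    (hcenter : LieAlgebra.center R s = ⊥) (hs : s ≠ ⊤) : D ∉ (ad R L).range := by
  rw [LieHom.mem_range]
  rintro ⟨x, rfl⟩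
  have hmem (y : L) : y ∈ s ↔ ⁅x, y⁆ = 0 := by
    rw [← LieSubalgebra.mem_toSubmodule, ← hker, LinearMap.mem_ker, LieDerivation.coeFn_coe,
      ad_apply_apply]
  have hxs : x ∈ s := (hmem x).2 (lie_self x)
  have hx : (⟨x, hxs⟩ : s) ∈ LieAlgebra.center R s := fun y => by
    rw [← lie_skew, neg_eq_zero]
    exact Subtype.ext ((hmem y).1 y.2)
  rw [hcenter, LieSubmodule.mem_bot] at hx
  obtain rfl : x = 0 := congrArg Subtype.val hx
  exact hs (eq_top_iff.2 fun y _ => (hmem y).2 (zero_lie y))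

variable {K L : Type*} [Field K] [LieRing L] [LieAlgebra K L]

theorem exists_diagonalizable_notMem_range_ad {ι : Type*} {s : LieSubalgebra K L}
    (hcenter : LieAlgebra.center K s = ⊥) {V : ι → Submodule K L} (hV : ∃ i, V i ≠ ⊥)
    (hind : iSupIndep V) (hcompl : IsCompl s.toSubmodule (⨆ i, V i))
    (hinv : ∀ i, ∀ x ∈ s, ∀ v ∈ V i, ⁅x, v⁆ ∈ V i)
    {d : ι → K} (hd : ∀ i, d i ≠ 0) (hgr : IsBracketGraded V d) :
    ∃ D : LieDerivation K L L,
      ⨆ c, Module.End.eigenspace D.toLinearMap c = ⊤ ∧ D ∉ (ad K L).range := by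
  classical
  let W : Option ι → Submodule K L := fun o => o.elim s.toSubmodule V
  let e : Option ι → K := fun o => o.elim 0 d
  have htop : ⨆ o, W o = ⊤ := (iSup_option_elim _ _).trans hcompl.sup_eq_top
  let : GradedLieAlgebra (degreePart W e) :=
    (hgr.option_elim s hinv).gradedLieAlgebra (iSupIndep_option_elim hind hcompl.disjoint) htop
  refine ⟨.ofGrading (degreePart W e) (.id K), ?_, notMem_range_ad_of_ker_eq ?_ hcenter ?_⟩
  · rw [eigenspace_ofGrading, iSup_degreePart, htop]
  · rw [← Module.End.eigenspace_zero, eigenspace_ofGrading]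
    exact degreePart_option_elim_zero _ hd
  · rintro rfl
    obtain ⟨i, hi⟩ := hV
    exact hi (eq_bot_mono (le_iSup V i) (disjoint_top.1 hcompl.disjoint.symm))

theorem stmt8_general (h2 : (2 : K) ≠ 0) (h3 : (3 : K) ≠ 0)
    {s : LieSubalgebra K L} (hcenter : LieAlgebra.center K s = ⊥)
    {V : Fin 4 → Submodule K L} (hV : ∃ i, V i ≠ ⊥) (hind : iSupIndep V)
    (hcompl : IsCompl s.toSubmodule (⨆ i, V i))
    (hinv : ∀ i, ∀ x ∈ s, ∀ v ∈ V i, ⁅x, v⁆ ∈ V i)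
    (h00 : ∀ x ∈ V 0, ∀ y ∈ V 0, ⁅x, y⁆ ∈ V 2)
    (h02 : ∀ x ∈ V 0, ∀ y ∈ V 2, ⁅x, y⁆ ∈ V 3)
    (h11 : ∀ x ∈ V 1, ∀ y ∈ V 1, ⁅x, y⁆ ∈ V 3)
    (h01 : ∀ x ∈ V 0, ∀ y ∈ V 1, ⁅x, y⁆ = 0)
    (h03 : ∀ x ∈ V 0, ∀ y ∈ V 3, ⁅x, y⁆ = 0)
    (h12 : ∀ x ∈ V 1, ∀ y ∈ V 2, ⁅x, y⁆ = 0)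
    (h13 : ∀ x ∈ V 1, ∀ y ∈ V 3, ⁅x, y⁆ = 0)
    (h22 : ∀ x ∈ V 2, ∀ y ∈ V 2, ⁅x, y⁆ = 0)
    (h23 : ∀ x ∈ V 2, ∀ y ∈ V 3, ⁅x, y⁆ = 0)
    (h33 : ∀ x ∈ V 3, ∀ y ∈ V 3, ⁅x, y⁆ = 0) :
    ∃ D : LieDerivation K L L,
      ⨆ c, Module.End.eigenspace D.toLinearMap c = ⊤ ∧ D ∉ (ad K L).range := by
  -- The nonzero brackets force `d 2 = 2 * d 0`, `d 3 = 3 * d 0` and `2 * d 1 = d 3`, so these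
  -- degrees are the only ones up to a common factor.
  let d : Fin 4 → K := ![2, 3, 4, 6]
  have h4 : (4 : K) ≠ 0 := by rw [show (4 : K) = 2 * 2 by norm_num]; exact mul_ne_zero h2 h2
  have h6 : (6 : K) ≠ 0 := by rw [show (6 : K) = 2 * 3 by norm_num]; exact mul_ne_zero h2 h3
  have hd (i : Fin 4) : d i ≠ 0 := by fin_cases i <;> assumption
  refine exists_diagonalizable_notMem_range_ad hcenter hV hind hcompl hinv hd
    (isBracketGraded_of_le fun i j hij x hx y hy => ?_)
  have of_mem (k : Fin 4) (hk : d k = d i + d j) (h : ⁅x, y⁆ ∈ V k) :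
      ⁅x, y⁆ ∈ degreePart V d (d i + d j) := hk ▸ le_degreePart V d k h
  have of_zero (h : ⁅x, y⁆ = 0) : ⁅x, y⁆ ∈ degreePart V d (d i + d j) := h ▸ zero_mem _
  fin_cases i <;> fin_cases j <;> try exact absurd hij (by decide)
  · exact of_mem 2 (show (4 : K) = 2 + 2 by norm_num) (h00 x hx y hy)
  · exact of_zero (h01 x hx y hy)
  · exact of_mem 3 (show (6 : K) = 2 + 4 by norm_num) (h02 x hx y hy)
  · exact of_zero (h03 x hx y hy)
  · exact of_mem 3 (show (6 : K) = 3 + 3 by norm_num) (h11 x hx y hy)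
  · exact of_zero (h12 x hx y hy)
  · exact of_zero (h13 x hx y hy)
  · exact of_zero (h22 x hx y hy)
  · exact of_zero (h23 x hx y hy)
  · exact of_zero (h33 x hx y hy)

end Derivation

namespace Symp

variable {g : Type*} [LieRing g] [LieAlgebra ℂ g]

theorem lieSpan2_le_iff {A B C : Submodule ℂ g} :
    lieSpan2 g A B ≤ C ↔ ∀ a ∈ A, ∀ b ∈ B, ⁅a, b⁆ ∈ C := by
  rw [lieSpan2, Submodule.span_le]
  exact ⟨fun h a ha b hb => h ⟨a, ha, b, hb, rfl⟩,
    fun h _ ⟨a, ha, b, hb, hab⟩ => hab ▸ h a ha b hb⟩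

theorem lieSpan2_eq_bot_iff {A B : Submodule ℂ g} :
    lieSpan2 g A B = ⊥ ↔ ∀ a ∈ A, ∀ b ∈ B, ⁅a, b⁆ = 0 := by
  simp only [← le_bot_iff, lieSpan2_le_iff, Submodule.mem_bot]

theorem isInnerDer_iff_mem_range_ad {D : LieDerivation ℂ g g} :
    IsInnerDer D ↔ D ∈ (LieDerivation.ad ℂ g).range := by
  rw [LieHom.mem_range]
  exact exists_congr fun x => by
    simp only [LieDerivation.ext_iff, LieDerivation.ad_apply_apply, eq_comm]

end Symp

/-- the bracket table `[V_n,V_n] = V_p`, `[V_n,V_p] = V_k`, `[V_m,V_m] = V_k`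
(all other products zero) forces a diagonalizable non-inner derivation; `g` is not
sympathetic. Here `V 0 = V_n`, `V 1 = V_m`, `V 2 = V_p`, `V 3 = V_k`. -/
theorem stmt8 (g : Type*) [LieRing g] [LieAlgebra ℂ g] [FiniteDimensional ℂ g]
    (hperf : Symp.IsPerfectLie g)
    (s : LieSubalgebra ℂ g) (hs : Symp.IsSimpleLevi g s)
    (V : Fin 4 → Submodule ℂ g) (hdec : Symp.IsDecomp g s V)
    (hZ : Symp.centerRad g = V 3)
    (hder : Symp.derivedRad g = V 2 ⊔ V 3)
    (h00 : Symp.lieSpan2 g (V 0) (V 0) = V 2)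
    (h02 : Symp.lieSpan2 g (V 0) (V 2) = V 3)
    (h11 : Symp.lieSpan2 g (V 1) (V 1) = V 3)
    (h01 : Symp.lieSpan2 g (V 0) (V 1) = ⊥)
    (h03 : Symp.lieSpan2 g (V 0) (V 3) = ⊥)
    (h12 : Symp.lieSpan2 g (V 1) (V 2) = ⊥)
    (h13 : Symp.lieSpan2 g (V 1) (V 3) = ⊥)
    (h22 : Symp.lieSpan2 g (V 2) (V 2) = ⊥)
    (h23 : Symp.lieSpan2 g (V 2) (V 3) = ⊥)
    (h33 : Symp.lieSpan2 g (V 3) (V 3) = ⊥) :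
    (∃ D : LieDerivation ℂ g g,
       Module.End.IsSemisimple (D.toLinearMap : Module.End ℂ g) ∧ ¬ Symp.IsInnerDer D) ∧
    ¬ Symp.IsSympathetic g := by
  have hs_simple := hs.1
  obtain ⟨D, hdiag, hD⟩ := stmt8_general two_ne_zero three_ne_zero
    (LieAlgebra.center_eq_bot ℂ s) ⟨0, (hdec.1 0).1⟩ hdec.2.1 (hdec.2.2 ▸ hs.2)
    (fun i => (hdec.1 i).2.1)
    (Symp.lieSpan2_le_iff.1 h00.le) (Symp.lieSpan2_le_iff.1 h02.le)
    (Symp.lieSpan2_le_iff.1 h11.le) (Symp.lieSpan2_eq_bot_iff.1 h01)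
    (Symp.lieSpan2_eq_bot_iff.1 h03) (Symp.lieSpan2_eq_bot_iff.1 h12)
    (Symp.lieSpan2_eq_bot_iff.1 h13) (Symp.lieSpan2_eq_bot_iff.1 h22)
    (Symp.lieSpan2_eq_bot_iff.1 h23) (Symp.lieSpan2_eq_bot_iff.1 h33)
  have hnot : ¬ Symp.IsInnerDer D := mt Symp.isInnerDer_iff_mem_range_ad.1 hD
  exact ⟨⟨D, isSemisimple_of_iSup_eigenspace_eq_top hdiag, hnot⟩,
    fun hsymp => hnot (hsymp.2.2 D)⟩
end

section
/- Let g = s ⋉ h be a finite-dimensional sympathetic complex Lie algebra with simple Levi subalgebra s whose radical h decomposes into 4 simple s-modules satisfying the convention. Then there is a labeling of the four modules as V_n, V_m, V_p, V_k such that [h,h] = V_p ⊕ V_k and Z(h) = V_k; that is, the derived ideal of h is the sum of exactly two of the four modules and the center of h is exactly one of them. -/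
/-!
Write `h` for the radical. Perfectness forces `h` to act nilpotently on `g`. If `h` is a direct sum
of `s`-submodules graded by complex weights, then multiplication by the weights, extended by zero on
`s`, is a derivation of `g`, hence of the form `ad x`; it kills `s`, so `x` lies in `h` and acts
nilpotently, and therefore all weights of nonzero summands vanish. Three gradings exploit this:

* weight `1` on a complement of `Z(h) ∩ [h, h]` in `Z(h)` and `0` elsewhere gives `Z(h) ≤ [h, h]`;
* weight `1` on a complement of `[h, h]` and `2` on `[h, h]` gives `[h, [h, h]] ≠ 0`;
* if `h` were generated by a single module of the decomposition, word length would grade it by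
  nonzero weights, so at least two modules lie outside `[h, h]`.

Every term of the lower central series of `h` is a sum of some of the modules, so with four modules
the quotients of `h > [h, h] > [h, [h, h]]` account for two, one and one module respectively.
-/

namespace Symp

section Bracket

variable {g : Type*} [LieRing g] [LieAlgebra ℂ g] {A B C A' B' : Submodule ℂ g}

theorem lie_mem_lieSpan2 {x y : g} (hx : x ∈ A) (hy : y ∈ B) : ⁅x, y⁆ ∈ lieSpan2 g A B :=
  Submodule.subset_span ⟨x, hx, y, hy, rfl⟩

theorem lieSpan2_le : lieSpan2 g A B ≤ C ↔ ∀ x ∈ A, ∀ y ∈ B, ⁅x, y⁆ ∈ C := by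
  refine ⟨fun h x hx y hy => h (lie_mem_lieSpan2 hx hy), fun h => Submodule.span_le.2 ?_⟩
  rintro _ ⟨x, hx, y, hy, rfl⟩
  exact h x hx y hy

theorem lieSpan2_eq_map₂ (A B : Submodule ℂ g) :
    lieSpan2 g A B = Submodule.map₂ (LieModule.toEnd ℂ g g : g →ₗ[ℂ] g →ₗ[ℂ] g) A B :=
  le_antisymm (lieSpan2_le.2 fun _ hx _ hy => Submodule.apply_mem_map₂ _ hx hy)
    (Submodule.map₂_le.2 fun _ hx _ hy => lie_mem_lieSpan2 hx hy)

theorem lieSpan2_mono (hA : A ≤ A') (hB : B ≤ B') : lieSpan2 g A B ≤ lieSpan2 g A' B' :=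
  lieSpan2_le.2 fun _ hx _ hy => lie_mem_lieSpan2 (hA hx) (hB hy)

theorem lieSpan2_comm (A B : Submodule ℂ g) : lieSpan2 g A B = lieSpan2 g B A := by
  have h (A B : Submodule ℂ g) : lieSpan2 g A B ≤ lieSpan2 g B A :=
    lieSpan2_le.2 fun x hx y hy => by
      rw [← lie_skew]
      exact neg_mem (lie_mem_lieSpan2 hy hx)
  exact le_antisymm (h A B) (h B A)

theorem lieSpan2_bot_right (A : Submodule ℂ g) : lieSpan2 g A ⊥ = ⊥ := by
  rw [lieSpan2_eq_map₂, Submodule.map₂_bot_right]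

theorem lieSpan2_sup_right (A B C : Submodule ℂ g) :
    lieSpan2 g A (B ⊔ C) = lieSpan2 g A B ⊔ lieSpan2 g A C := by
  simp only [lieSpan2_eq_map₂, Submodule.map₂_sup_right]

theorem lieSpan2_iSup_right {ι : Sort*} (A : Submodule ℂ g) (B : ι → Submodule ℂ g) :
    lieSpan2 g A (⨆ i, B i) = ⨆ i, lieSpan2 g A (B i) := by
  simp only [lieSpan2_eq_map₂, Submodule.map₂_iSup_right]

theorem lieSpan2_lieSpan2_le (A B C : Submodule ℂ g) :
    lieSpan2 g A (lieSpan2 g B C) ≤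
      lieSpan2 g (lieSpan2 g A B) C ⊔ lieSpan2 g B (lieSpan2 g A C) := by
  refine lieSpan2_le.2 fun x hx => ?_
  suffices lieSpan2 g B C ≤ Submodule.comap (LieModule.toEnd ℂ g g x)
      (lieSpan2 g (lieSpan2 g A B) C ⊔ lieSpan2 g B (lieSpan2 g A C)) from this
  refine lieSpan2_le.2 fun y hy z hz => ?_
  rw [Submodule.mem_comap, LieModule.toEnd_apply_apply, leibniz_lie]
  exact Submodule.add_mem_sup (lie_mem_lieSpan2 (lie_mem_lieSpan2 hx hy) hz)
    (lie_mem_lieSpan2 hy (lie_mem_lieSpan2 hx hz))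

theorem lieSpan2_toSubmodule (I J : LieIdeal ℂ g) :
    lieSpan2 g I.toSubmodule J.toSubmodule = (⁅I, J⁆ : LieIdeal ℂ g).toSubmodule := by
  rw [LieSubmodule.lieIdeal_oper_eq_linear_span']
  simp only [lieSpan2, eq_comm, LieSubmodule.mem_toSubmodule]

end Bracket

section NilpotentAction

theorem top_lie_eq_self_of_isCompl {R L : Type*} [CommRing R] [LieRing L] [LieAlgebra R L]
    {s : LieSubalgebra R L} {I : LieIdeal R L}
    (hperf : ⁅(⊤ : LieIdeal R L), (⊤ : LieIdeal R L)⁆ = ⊤)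
    (hcompl : IsCompl s.toSubmodule I.toSubmodule) :
    ⁅(⊤ : LieIdeal R L), I⁆ = I := by
  set J : LieIdeal R L := ⁅(⊤ : LieIdeal R L), I⁆
  have hJI : J ≤ I := LieSubmodule.lie_le_right _ _
  have decompose (x : L) : ∃ a ∈ s, ∃ r ∈ I, a + r = x :=
    Submodule.mem_sup.1 (hcompl.sup_eq_top.ge (Submodule.mem_top (x := x)))
  have hspan : (⊤ : Submodule R L) ≤ s.toSubmodule ⊔ J.toSubmodule := by
    rw [← LieSubmodule.top_toSubmodule (L := L), ← hperf,
      LieSubmodule.lieIdeal_oper_eq_linear_span', Submodule.span_le]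
    rintro _ ⟨x, -, y, -, rfl⟩
    obtain ⟨a, ha, r, hr, rfl⟩ := decompose x
    obtain ⟨b, hb, t, ht, rfl⟩ := decompose y
    have hexpand : ⁅a + r, b + t⁆ = ⁅a, b⁆ + (⁅a + r, t⁆ - ⁅b, r⁆) := by
      rw [sub_eq_add_neg, lie_skew]
      simp only [add_lie, lie_add]
      abel
    rw [hexpand]
    exact Submodule.add_mem_sup (s.lie_mem ha hb) <| sub_mem
      (LieSubmodule.lie_mem_lie (LieSubmodule.mem_top _) ht)
      (LieSubmodule.lie_mem_lie (LieSubmodule.mem_top _) hr)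
  refine LieSubmodule.toSubmodule_injective <| eq_of_le_of_inf_le_of_le_sup hJI
    (z := s.toSubmodule) (hcompl.symm.disjoint.le_bot.trans bot_le) ?_
  rw [sup_comm]
  exact le_top.trans hspan

variable {K L M : Type*} [Field K] [CharZero K] [LieRing L] [LieAlgebra K L]
  [AddCommGroup M] [Module K M] [LieRingModule L M] [LieModule K L M] [FiniteDimensional K M]
  {A : LieIdeal K L}

theorem lie_eq_zero_of_mem_weightSpace (hA : ⁅(⊤ : LieIdeal K L), A⁆ = A) {χ : Module.Dual K A}
    {v : M} (hv : v ∈ LieModule.weightSpace M χ) (a : A) : ⁅a, v⁆ = 0 := by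
  rcases eq_or_ne v 0 with rfl | hv0
  · exact lie_zero a
  have hv_eq : ∀ b : A, ⁅b, v⁆ = χ b • v := (LieModule.mem_weightSpace _ _).1 hv
  -- `L` preserves the weight space, so `χ` vanishes on `[L, A] = A`.
  have hχ_lie (z : L) (b : A) : χ ⁅z, b⁆ = 0 := by
    have hzv : ⁅z, v⁆ ∈ LieModule.weightSpace M χ :=
      (LieModule.weightSpaceOfIsLieTower (L := L) K M χ).lie_mem hv
    have hleib : ⁅z, ⁅b, v⁆⁆ = ⁅⁅z, b⁆, v⁆ + ⁅b, ⁅z, v⁆⁆ := leibniz_lie z b v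
    rw [LieModule.mem_weightSpace] at hzv
    rw [hv_eq, hv_eq, hzv, lie_smul, right_eq_add] at hleib
    exact (smul_eq_zero.1 hleib).resolve_right hv0
  have hχ : A.toSubmodule ≤ (LinearMap.ker χ).map A.toSubmodule.subtype := by
    conv_lhs => rw [← hA, LieSubmodule.lieIdeal_oper_eq_linear_span']
    rw [Submodule.span_le]
    rintro _ ⟨z, -, b, hb, rfl⟩
    exact ⟨(⁅z, (⟨b, hb⟩ : A)⁆ : A), hχ_lie z ⟨b, hb⟩, rfl⟩
  obtain ⟨b, hb, hba⟩ := hχ a.2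
  obtain rfl : b = a := Subtype.ext hba
  rw [hv_eq, LinearMap.mem_ker.1 hb, zero_smul]

variable [IsAlgClosed K] [LieAlgebra.IsSolvable A]

theorem lie_top_ne_top [Nontrivial M] (hA : ⁅(⊤ : LieIdeal K L), A⁆ = A) :
    ⁅A, (⊤ : LieSubmodule K L M)⁆ ≠ ⊤ := by
  intro htop
  -- A weight vector of the dual module is `A`-invariant, that is, it vanishes on `[A, M]`.
  obtain ⟨χ, hχ⟩ :=
    LieModule.exists_nontrivial_weightSpace_of_isSolvable K A (Module.Dual K M)
  obtain ⟨⟨f, hf⟩, hf0⟩ := exists_ne (0 : LieModule.weightSpace (Module.Dual K M) χ)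
  have hker : (⁅A, (⊤ : LieSubmodule K L M)⁆).toSubmodule ≤ LinearMap.ker f := by
    rw [LieSubmodule.lieIdeal_oper_eq_linear_span', Submodule.span_le]
    rintro _ ⟨a, ha, m, -, rfl⟩
    have h := LinearMap.congr_fun (lie_eq_zero_of_mem_weightSpace hA hf ⟨a, ha⟩) m
    rwa [LieIdeal.coe_bracket_of_module, Module.Dual.lie_apply, LinearMap.zero_apply,
      neg_eq_zero] at h
  rw [htop, LieSubmodule.top_toSubmodule, top_le_iff, LinearMap.ker_eq_top] at hker
  exact hf0 (Subtype.ext hker)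

theorem isNilpotent_of_top_lie_eq_self (hA : ⁅(⊤ : LieIdeal K L), A⁆ = A) :
    LieModule.IsNilpotent A M := by
  obtain ⟨n, hn⟩ :=
    (LieModule.eventually_iInf_lowerCentralSeries_eq K A M).exists_forall_of_atTop
  set N : LieSubmodule K L M := A.lcs M n
  have hstab : ⁅A, N⁆ = N := by
    rw [← LieIdeal.lcs_succ]
    refine LieSubmodule.toSubmodule_injective ?_
    rw [LieIdeal.coe_lcs_eq, LieIdeal.coe_lcs_eq, ← hn (n + 1) n.le_succ, hn n le_rfl]
  have hN : N = ⊥ := by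
    by_contra hne
    have := (LieSubmodule.nontrivial_iff_ne_bot K L M).2 hne
    refine lie_top_ne_top (M := N) hA (LieSubmodule.map_injective_of_injective
      (f := N.incl) Subtype.val_injective ?_)
    rw [LieSubmodule.map_bracket_eq, LieModuleHom.map_top, N.range_incl, hstab]
  rw [LieModule.isNilpotent_iff K]
  refine ⟨n, LieSubmodule.toSubmodule_injective ?_⟩
  rw [← LieIdeal.coe_lcs_eq]
  exact congrArg _ hN

end NilpotentAction

section Derivations

variable {R L : Type*} [CommRing R] [LieRing L] [LieAlgebra R L]

theorem isSolvable_of_lie_self_le {I J : LieIdeal R L} [LieAlgebra.IsSolvable J] (h : ⁅I, I⁆ ≤ J) :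
    LieAlgebra.IsSolvable I := by
  obtain ⟨k, hk⟩ := (LieAlgebra.isSolvable_iff R J).1 ‹_›
  rw [LieIdeal.derivedSeries_eq_bot_iff] at hk
  refine LieAlgebra.IsSolvable.mk (R := R) (k := k + 1)
    ((LieIdeal.derivedSeries_eq_bot_iff I _).2 (le_bot_iff.1 ?_))
  rw [LieAlgebra.derivedSeriesOfIdeal_add, ← hk]
  exact LieAlgebra.derivedSeriesOfIdeal_mono h k

theorem normalizer_radical [IsNoetherian R L] :
    (LieAlgebra.radical R L).normalizer = LieAlgebra.radical R L := by
  refine le_antisymm ((LieAlgebra.LieIdeal.solvable_iff_le_radical R L _).1 ?_)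
    (LieSubmodule.le_normalizer _)
  refine isSolvable_of_lie_self_le (J := LieAlgebra.radical R L)
    (LieSubmodule.lie_le_iff _ _ _ |>.2 fun x _ y hy => ?_)
  exact (LieSubmodule.mem_normalizer _ y).1 hy x

theorem mem_radical_of_lie_eq_zero [IsNoetherian R L] {s : LieSubalgebra R L}
    (hcompl : IsCompl s.toSubmodule (LieAlgebra.radical R L).toSubmodule) {x : L}
    (hx : ∀ b ∈ s, ⁅b, x⁆ = 0) : x ∈ LieAlgebra.radical R L := by
  rw [← normalizer_radical, LieSubmodule.mem_normalizer]
  intro y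
  obtain ⟨b, hb, r, hr, rfl⟩ :=
    Submodule.mem_sup.1 (hcompl.sup_eq_top.ge (Submodule.mem_top (x := y)))
  rw [add_lie, hx b hb, zero_add]
  exact lie_mem_left R L _ _ _ hr

theorem exists_lieDerivation_of_isCompl {s : LieSubalgebra R L} {I : LieIdeal R L}
    (hcompl : IsCompl s.toSubmodule I.toSubmodule) (E : L →ₗ[R] L)
    (hE_equivariant : ∀ a ∈ s, ∀ x ∈ I, E ⁅a, x⁆ = ⁅a, E x⁆)
    (hE_leibniz : ∀ x ∈ I, ∀ y ∈ I, E ⁅x, y⁆ = ⁅x, E y⁆ - ⁅y, E x⁆) :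
    ∃ D : LieDerivation R L L, (∀ a ∈ s, D a = 0) ∧ ∀ x ∈ I, D x = E x := by
  let D : L →ₗ[R] L := E ∘ₗ I.toSubmodule.projection s.toSubmodule hcompl.symm
  have hDs (a : L) (ha : a ∈ s) : D a = 0 := by
    rw [LinearMap.comp_apply, Submodule.projection_apply_of_mem_right hcompl.symm ha, map_zero]
  have hDI (x : L) (hx : x ∈ I) : D x = E x := by
    rw [LinearMap.comp_apply, Submodule.projection_apply_of_mem_left hcompl.symm hx]
  have decompose (x : L) : ∃ a ∈ s, ∃ r ∈ I, a + r = x :=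
    Submodule.mem_sup.1 (hcompl.sup_eq_top.ge (Submodule.mem_top (x := x)))
  refine ⟨⟨D, fun x y => ?_⟩, hDs, hDI⟩
  obtain ⟨a, ha, r, hr, rfl⟩ := decompose x
  obtain ⟨b, hb, t, ht, rfl⟩ := decompose y
  have hat : ⁅a, t⁆ ∈ I := I.lie_mem ht
  have hbr : ⁅b, r⁆ ∈ I := I.lie_mem hr
  have hrt : ⁅r, t⁆ ∈ I := I.lie_mem ht
  have hexpand : ⁅a + r, b + t⁆ = ⁅a, b⁆ + ⁅a, t⁆ - ⁅b, r⁆ + ⁅r, t⁆ := by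
    rw [sub_eq_add_neg, lie_skew]
    simp only [add_lie, lie_add]
    abel
  rw [hexpand]
  simp only [map_add, map_sub, hDs _ ha, hDs _ hb, hDs _ (s.lie_mem ha hb), hDI _ hr, hDI _ ht,
    hDI _ hat, hDI _ hbr, hDI _ hrt, hE_equivariant a ha t ht, hE_equivariant b hb r hr,
    hE_leibniz r hr t ht, add_lie, zero_add]
  abel

end Derivations

section Grading

theorem exists_linearMap_eq_smul {ι K W : Type*} [Field K] [AddCommGroup W] [Module K W]
    {V : ι → Submodule K W} (hV : iSupIndep V) (w : ι → K) :
    ∃ E : W →ₗ[K] W, ∀ i, ∀ v ∈ V i, E v = w i • v := by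
  classical
  obtain ⟨F, hF⟩ := LinearMap.exists_leftInverse_of_injective _
    (LinearMap.ker_eq_bot.2 hV.dfinsupp_lsum_injective)
  refine ⟨DFinsupp.lsum ℕ (fun i => w i • (V i).subtype) ∘ₗ F, fun i v hv => ?_⟩
  have hFv : F v = DFinsupp.single i ⟨v, hv⟩ := by
    simpa using LinearMap.congr_fun hF (DFinsupp.single i ⟨v, hv⟩)
  simp [hFv]

theorem eq_zero_of_lie_eq_smul {K L M : Type*} [Field K] [LieRing L] [LieAlgebra K L]
    [AddCommGroup M] [Module K M] [LieRingModule L M] [LieModule K L M] [LieModule.IsNilpotent L M]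
    {x : L} {v : M} (hv : v ≠ 0) {c : K} (h : ⁅x, v⁆ = c • v) : c = 0 :=
  (Module.End.HasEigenvalue.isNilpotent_of_isNilpotent
    (LieModule.isNilpotent_toEnd_of_isNilpotent K L M x)
    (Module.End.hasEigenvalue_of_hasEigenvector
      ⟨Module.End.mem_eigenspace_iff.2 h, hv⟩)).eq_zero

variable {g : Type*} [LieRing g] [LieAlgebra ℂ g] {ι : Type*}

/-- The family `V` of subspaces is graded by the weights `w`: brackets of `V i` and `V j` lie in
the span of the members of weight `w i + w j`. Several members may share a weight. -/
def IsGrading (V : ι → Submodule ℂ g) (w : ι → ℂ) : Prop :=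
  ∀ i j, lieSpan2 g (V i) (V j) ≤ ⨆ (q) (_ : w q = w i + w j), V q

theorem IsGrading.map_lie {V : ι → Submodule ℂ g} {w : ι → ℂ} (hgrad : IsGrading V w)
    {E : g →ₗ[ℂ] g} (hE : ∀ i, ∀ v ∈ V i, E v = w i • v) {x y : g} (hx : x ∈ ⨆ i, V i)
    (hy : y ∈ ⨆ i, V i) : E ⁅x, y⁆ = ⁅x, E y⁆ - ⁅y, E x⁆ := by
  have homogeneous (i : ι) (u : g) (hu : u ∈ V i) (j : ι) (v : g) (hv : v ∈ V j) :
      E ⁅u, v⁆ = (w i + w j) • ⁅u, v⁆ := by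
    suffices ⨆ (q) (_ : w q = w i + w j), V q ≤
        LinearMap.eqLocus E ((w i + w j) • LinearMap.id) from
      this (hgrad i j (lie_mem_lieSpan2 hu hv))
    refine iSup₂_le fun q hq z hz => ?_
    simp [hE q z hz, hq]
  induction hx using Submodule.iSup_induction' with
  | zero => simp
  | add x₁ x₂ _ _ h₁ h₂ =>
    simp only [add_lie, lie_add, map_add, h₁, h₂]
    abel
  | mem i u hu =>
    induction hy using Submodule.iSup_induction' with
    | zero => simp
    | add y₁ y₂ _ _ h₁ h₂ =>
      simp only [add_lie, lie_add, map_add, h₁, h₂]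
      abel
    | mem j v hv =>
      rw [homogeneous i u hu j v hv, hE i u hu, hE j v hv, lie_smul, lie_smul, ← lie_skew v u,
        smul_neg, sub_neg_eq_add, add_smul, add_comm]

theorem IsGrading.weight_eq_zero [FiniteDimensional ℂ g]
    [LieModule.IsNilpotent (LieAlgebra.radical ℂ g) g]
    (hinn : ∀ D : LieDerivation ℂ g g, IsInnerDer D) {s : LieSubalgebra ℂ g}
    (hcompl : IsCompl s.toSubmodule (LieAlgebra.radical ℂ g).toSubmodule)
    {V : ι → Submodule ℂ g} {w : ι → ℂ} (hgrad : IsGrading V w) (hV : iSupIndep V)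
    (hsup : ⨆ i, V i = (LieAlgebra.radical ℂ g).toSubmodule)
    (hinv : ∀ i, Invariant g s (V i)) {i : ι} (hi : V i ≠ ⊥) : w i = 0 := by
  obtain ⟨E, hE⟩ := exists_linearMap_eq_smul hV w
  have hVrad (i : ι) : V i ≤ (LieAlgebra.radical ℂ g).toSubmodule := hsup ▸ le_iSup V i
  have hE_equivariant (a : g) (ha : a ∈ s) :
      (LieAlgebra.radical ℂ g).toSubmodule ≤
        LinearMap.eqLocus (E ∘ₗ LieModule.toEnd ℂ g g a) (LieModule.toEnd ℂ g g a ∘ₗ E) := by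
    rw [← hsup]
    refine iSup_le fun i v hv => ?_
    simp [hE i v hv, hE i _ (hinv i a ha v hv)]
  have hE_leibniz (x : g) (hx : x ∈ (LieAlgebra.radical ℂ g).toSubmodule) (y : g)
      (hy : y ∈ (LieAlgebra.radical ℂ g).toSubmodule) : E ⁅x, y⁆ = ⁅x, E y⁆ - ⁅y, E x⁆ :=
    hgrad.map_lie hE (hsup ▸ hx) (hsup ▸ hy)
  obtain ⟨D, hDs, hDE⟩ := exists_lieDerivation_of_isCompl hcompl E hE_equivariant hE_leibniz
  obtain ⟨x, hx⟩ := hinn D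
  have hxrad : x ∈ LieAlgebra.radical ℂ g := mem_radical_of_lie_eq_zero hcompl fun b hb => by
    rw [← lie_skew, ← hx, hDs b hb, neg_zero]
  obtain ⟨v, hv, hv0⟩ := Submodule.exists_mem_ne_zero_of_ne_bot hi
  refine eq_zero_of_lie_eq_smul (x := (⟨x, hxrad⟩ : LieAlgebra.radical ℂ g)) hv0 ?_
  rw [LieIdeal.coe_bracket_of_module, ← hx, hDE v (hVrad i hv), hE i v hv]

end Grading

section Invariant

variable {g : Type*} [LieRing g] [LieAlgebra ℂ g] {s : LieSubalgebra ℂ g} {A B C : Submodule ℂ g}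

theorem invariant_iff_exists_lieSubmodule :
    Invariant g s A ↔ ∃ N : LieSubmodule ℂ s g, N.toSubmodule = A := by
  refine ⟨fun h => ⟨{ A with lie_mem := fun {x} _ hm => h x x.2 _ hm }, rfl⟩, ?_⟩
  rintro ⟨N, rfl⟩ x hx w hw
  exact N.lie_mem (x := (⟨x, hx⟩ : s)) hw

theorem invariant_toSubmodule (I : LieIdeal ℂ g) : Invariant g s I.toSubmodule :=
  fun _ _ _ hw => I.lie_mem hw

theorem Invariant.sup (hA : Invariant g s A) (hB : Invariant g s B) : Invariant g s (A ⊔ B) := by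
  rw [invariant_iff_exists_lieSubmodule] at *
  obtain ⟨M, rfl⟩ := hA
  obtain ⟨N, rfl⟩ := hB
  exact ⟨M ⊔ N, LieSubmodule.sup_toSubmodule M N⟩

theorem Invariant.inf (hA : Invariant g s A) (hB : Invariant g s B) : Invariant g s (A ⊓ B) :=
  fun x hx w hw => ⟨hA x hx w hw.1, hB x hx w hw.2⟩

theorem Invariant.lieSpan2 (hA : Invariant g s A) (hB : Invariant g s B) :
    Invariant g s (lieSpan2 g A B) := by
  intro x hx
  suffices Symp.lieSpan2 g A B ≤
      (Symp.lieSpan2 g A B).comap (LieModule.toEnd ℂ g g x) from this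
  refine lieSpan2_le.2 fun a ha b hb => ?_
  rw [Submodule.mem_comap, LieModule.toEnd_apply_apply, leibniz_lie]
  exact add_mem (lie_mem_lieSpan2 (hA x hx a ha) hb) (lie_mem_lieSpan2 ha (hB x hx b hb))

theorem le_centerRad_iff : A ≤ centerRad g ↔ A ≤ (LieAlgebra.radical ℂ g).toSubmodule ∧
    lieSpan2 g (LieAlgebra.radical ℂ g).toSubmodule A = ⊥ := by
  rw [lieSpan2_comm, eq_bot_iff, lieSpan2_le]
  exact ⟨fun h => ⟨fun x hx => (h hx).1, fun x hx => (h hx).2⟩, fun h x hx => ⟨h.1 hx, h.2 x hx⟩⟩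

theorem centerRad_le_radical : centerRad g ≤ (LieAlgebra.radical ℂ g).toSubmodule :=
  (le_centerRad_iff.1 le_rfl).1

theorem lieSpan2_centerRad_eq_bot :
    lieSpan2 g (LieAlgebra.radical ℂ g).toSubmodule (centerRad g) = ⊥ :=
  (le_centerRad_iff.1 le_rfl).2

theorem derivedRad_le_radical : derivedRad g ≤ (LieAlgebra.radical ℂ g).toSubmodule :=
  lieSpan2_le.2 fun _ _ _ hy => lie_mem_right ℂ g _ _ _ hy

theorem invariant_derivedRad : Invariant g s (derivedRad g) :=
  (invariant_toSubmodule _).lieSpan2 (invariant_toSubmodule _)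

theorem invariant_centerRad : Invariant g s (centerRad g) := by
  intro x _ z hz
  refine ⟨lie_mem_right ℂ g _ x z hz.1, fun y hy => ?_⟩
  rw [lie_lie, hz.2 y hy, hz.2 _ (lie_mem_right ℂ g _ x y hy), lie_zero, sub_zero]

theorem IsIrreducibleSMod.isAtom {N : LieSubmodule ℂ s g}
    (hN : IsIrreducibleSMod g s N.toSubmodule) : IsAtom N := by
  refine ⟨fun h => hN.1 (by rw [h, LieSubmodule.bot_toSubmodule]), fun M hM => ?_⟩
  refine LieSubmodule.toSubmodule_injective <| (hN.2.2 M.toSubmodule hM.le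
    (invariant_iff_exists_lieSubmodule.2 ⟨M, rfl⟩)).resolve_right fun h => ?_
  exact hM.ne (LieSubmodule.toSubmodule_injective h)

theorem IsDecomp.exists_disjoint_sup_eq {k : ℕ} {V : Fin k → Submodule ℂ g}
    (hdec : IsDecomp g s V) (hA : Invariant g s A)
    (hle : A ≤ (LieAlgebra.radical ℂ g).toSubmodule) :
    ∃ B, Invariant g s B ∧ Disjoint A B ∧ A ⊔ B = (LieAlgebra.radical ℂ g).toSubmodule := by
  choose N hN using fun i => invariant_iff_exists_lieSubmodule.1 (hdec.1 i).2.1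
  obtain ⟨M, rfl⟩ := invariant_iff_exists_lieSubmodule.1 hA
  have hNsup : (⨆ i, N i).toSubmodule = (LieAlgebra.radical ℂ g).toSubmodule := by
    rw [LieSubmodule.iSup_toSubmodule, ← hdec.2.2]
    exact iSup_congr hN
  have hMN : M ≤ ⨆ i, N i := by
    rw [← LieSubmodule.toSubmodule_le_toSubmodule, hNsup]
    exact hle
  have hatoms : sSup {a ≤ ⨆ i, N i | IsAtom a} = ⨆ i, N i :=
    le_antisymm (sSup_le fun _ h => h.1) <| iSup_le fun i => le_sSup
      ⟨le_iSup N i, IsIrreducibleSMod.isAtom (by rw [hN]; exact hdec.1 i)⟩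
  obtain ⟨S, -, hdisj, hsup, -⟩ := exists_sSupIndep_disjoint_sSup_atoms M _ hMN hatoms
  refine ⟨(sSup S).toSubmodule, invariant_iff_exists_lieSubmodule.2 ⟨_, rfl⟩,
    LieSubmodule.disjoint_toSubmodule.2 hdisj, ?_⟩
  rw [← LieSubmodule.sup_toSubmodule, hsup, hNsup]

theorem IsDecomp.exists_disjoint_sup_eq_of_le {k : ℕ} {V : Fin k → Submodule ℂ g}
    (hdec : IsDecomp g s V) (hA : Invariant g s A) (hC : Invariant g s C) (hAC : A ≤ C)
    (hle : C ≤ (LieAlgebra.radical ℂ g).toSubmodule) :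
    ∃ B, Invariant g s B ∧ Disjoint A B ∧ A ⊔ B = C := by
  obtain ⟨B, hB, hdisj, hsup⟩ := hdec.exists_disjoint_sup_eq hA (hAC.trans hle)
  refine ⟨B ⊓ C, hB.inf hC, hdisj.mono_right inf_le_left, ?_⟩
  rw [← sup_inf_assoc_of_le B hAC, hsup, inf_eq_right.2 hle]

end Invariant

section TwoTermGradings

variable {g : Type*} [LieRing g] [LieAlgebra ℂ g] {s : LieSubalgebra ℂ g}

theorem eq_bot_of_le_lieSpan2 {I : LieIdeal ℂ g} [LieModule.IsNilpotent I g]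
    {A : Submodule ℂ g} (hA : A ≤ lieSpan2 g I.toSubmodule A) : A = ⊥ := by
  obtain ⟨n, hn⟩ := (LieModule.isNilpotent_iff ℂ I g).1 ‹_›
  have hlcs (n : ℕ) : A ≤ (I.lcs g n).toSubmodule := by
    induction n with
    | zero => exact le_top
    | succ n ih =>
      rw [LieIdeal.lcs_succ, ← lieSpan2_toSubmodule]
      exact hA.trans (lieSpan2_mono le_rfl ih)
  rw [eq_bot_iff, ← LieSubmodule.bot_toSubmodule (L := I), ← hn, ← LieIdeal.coe_lcs_eq]
  exact hlcs n

variable [FiniteDimensional ℂ g] [LieModule.IsNilpotent (LieAlgebra.radical ℂ g) g]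

theorem IsGrading.pair_weight_eq_zero (hinn : ∀ D : LieDerivation ℂ g g, IsInnerDer D)
    (hcompl : IsCompl s.toSubmodule (LieAlgebra.radical ℂ g).toSubmodule)
    {A B : Submodule ℂ g} {a b : ℂ} (hgrad : IsGrading ![A, B] ![a, b])
    (hA : Invariant g s A) (hB : Invariant g s B) (hdisj : Disjoint A B)
    (hsup : A ⊔ B = (LieAlgebra.radical ℂ g).toSubmodule) (hA0 : A ≠ ⊥) : a = 0 := by
  refine hgrad.weight_eq_zero hinn hcompl (i := 0) ?_ ?_ (Fin.forall_fin_two.2 ⟨hA, hB⟩) hA0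
  · exact (iSupIndep_pair zero_ne_one (by decide)).2 hdisj
  · rw [← hsup]
    exact le_antisymm (iSup_le (Fin.forall_fin_two.2 ⟨le_sup_left, le_sup_right⟩))
      (sup_le (le_iSup ![A, B] 0) (le_iSup ![A, B] 1))

variable {k : ℕ} {V : Fin k → Submodule ℂ g}

theorem centerRad_le_derivedRad (hinn : ∀ D : LieDerivation ℂ g g, IsInnerDer D)
    (hcompl : IsCompl s.toSubmodule (LieAlgebra.radical ℂ g).toSubmodule)
    (hdec : IsDecomp g s V) : centerRad g ≤ derivedRad g := by
  obtain ⟨W, hW, hdisjW, hsupW⟩ := hdec.exists_disjoint_sup_eq_of_le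
    (invariant_centerRad.inf invariant_derivedRad) invariant_centerRad inf_le_left
    centerRad_le_radical
  have hWZ : W ≤ centerRad g := le_sup_right.trans hsupW.le
  have hWR : W ≤ (LieAlgebra.radical ℂ g).toSubmodule := hWZ.trans centerRad_le_radical
  have hWD : Disjoint W (derivedRad g) := disjoint_iff_inf_le.2 <|
    (le_inf (le_inf (inf_le_left.trans hWZ) inf_le_right) inf_le_left).trans hdisjW.le_bot
  obtain ⟨M, hM, hdisjM, hsupM⟩ := hdec.exists_disjoint_sup_eq (hW.sup invariant_derivedRad)
    (sup_le hWR derivedRad_le_radical)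
  have hUR : derivedRad g ⊔ M ≤ (LieAlgebra.radical ℂ g).toSubmodule :=
    sup_le derivedRad_le_radical (le_sup_right.trans hsupM.le)
  have hcentral (B : Submodule ℂ g) (hB : B ≤ (LieAlgebra.radical ℂ g).toSubmodule) :
      lieSpan2 g B W = ⊥ := eq_bot_mono (lieSpan2_mono hB hWZ) lieSpan2_centerRad_eq_bot
  have hgrad : IsGrading ![W, derivedRad g ⊔ M] ![1, 0] := by
    refine Fin.forall_fin_two.2 ⟨Fin.forall_fin_two.2 ⟨?_, ?_⟩, Fin.forall_fin_two.2 ⟨?_, ?_⟩⟩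
    · exact (hcentral W hWR).le.trans bot_le
    · exact (lieSpan2_comm _ _).trans_le ((hcentral _ hUR).le.trans bot_le)
    · exact (hcentral _ hUR).le.trans bot_le
    · refine le_iSup₂_of_le 1 (by simp) ?_
      exact (lieSpan2_mono hUR hUR).trans le_sup_left
  have hW0 : W = ⊥ := by
    by_contra hW0
    exact one_ne_zero (hgrad.pair_weight_eq_zero hinn hcompl hW (invariant_derivedRad.sup hM)
      (hWD.disjoint_sup_right_of_disjoint_sup_left hdisjM) (by rw [← sup_assoc, hsupM]) hW0)
  rw [hW0, sup_bot_eq, inf_eq_left] at hsupW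
  exact hsupW

theorem lieSpan2_derivedRad_ne_bot (hinn : ∀ D : LieDerivation ℂ g g, IsInnerDer D)
    (hcompl : IsCompl s.toSubmodule (LieAlgebra.radical ℂ g).toSubmodule)
    (hdec : IsDecomp g s V) (hrad : (LieAlgebra.radical ℂ g).toSubmodule ≠ ⊥) :
    lieSpan2 g (LieAlgebra.radical ℂ g).toSubmodule (derivedRad g) ≠ ⊥ := by
  intro hbot
  obtain ⟨T, hT, hdisj, hsup⟩ :=
    hdec.exists_disjoint_sup_eq invariant_derivedRad derivedRad_le_radical
  have hTR : T ≤ (LieAlgebra.radical ℂ g).toSubmodule := le_sup_right.trans hsup.le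
  have hD (B : Submodule ℂ g) (hB : B ≤ (LieAlgebra.radical ℂ g).toSubmodule) :
      lieSpan2 g B (derivedRad g) = ⊥ := eq_bot_mono (lieSpan2_mono hB le_rfl) hbot
  have hgrad : IsGrading ![T, derivedRad g] ![1, 2] := by
    refine Fin.forall_fin_two.2 ⟨Fin.forall_fin_two.2 ⟨?_, ?_⟩, Fin.forall_fin_two.2 ⟨?_, ?_⟩⟩
    · refine le_iSup₂_of_le 1 (by norm_num) ?_
      exact lieSpan2_mono hTR hTR
    · exact (hD T hTR).le.trans bot_le
    · exact (lieSpan2_comm _ _).trans_le ((hD T hTR).le.trans bot_le)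
    · exact (hD _ derivedRad_le_radical).le.trans bot_le
  have hT0 : T = ⊥ := by
    by_contra hT0
    exact one_ne_zero (hgrad.pair_weight_eq_zero hinn hcompl hT invariant_derivedRad hdisj.symm
      (by rw [sup_comm, hsup]) hT0)
  rw [hT0, sup_bot_eq] at hsup
  exact hrad (eq_bot_of_le_lieSpan2 hsup.ge)

end TwoTermGradings

section SingleGenerator

variable {g : Type*} [LieRing g] [LieAlgebra ℂ g]

/-- The right-normed powers `U, [U, U], [U, [U, U]], …` of a subspace `U`, indexed from `0`, so that
`lieIter U n` is spanned by brackets of `n + 1` elements of `U`. -/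
def lieIter (U : Submodule ℂ g) : ℕ → Submodule ℂ g
  | 0 => U
  | n + 1 => lieSpan2 g U (lieIter U n)

variable {U : Submodule ℂ g}

theorem lieSpan2_lieIter_le (m n : ℕ) :
    lieSpan2 g (lieIter U m) (lieIter U n) ≤ lieIter U (m + n + 1) := by
  induction m generalizing n with
  | zero => rw [zero_add, lieIter, lieIter]
  | succ m ih =>
    rw [lieSpan2_comm, show m + 1 + n + 1 = m + n + 1 + 1 by omega]
    refine (lieSpan2_lieSpan2_le _ U _).trans (sup_le ?_ ?_)
    · rw [lieSpan2_comm, lieSpan2_comm _ U]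
      exact ih (n + 1)
    · rw [lieSpan2_comm (lieIter U n)]
      exact lieSpan2_mono le_rfl (ih n)

variable {I : LieIdeal ℂ g} {k : ℕ} {V : Fin k → Submodule ℂ g}

theorem isGrading_lieIter (U : Submodule ℂ g) :
    IsGrading (lieIter U) (fun n => (n : ℂ) + 1) := fun m n =>
  (lieSpan2_lieIter_le m n).trans <|
    le_iSup₂_of_le (f := fun (q : ℕ) (_ : (q : ℂ) + 1 = m + 1 + (n + 1)) => lieIter U q)
      (m + n + 1) (by push_cast; ring) le_rfl

theorem lieIter_le (hU : U ≤ I.toSubmodule) (n : ℕ) : lieIter U n ≤ I.toSubmodule := by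
  cases n with
  | zero => exact hU
  | succ n => exact lieSpan2_le.2 fun x hx y _ => lie_mem_left ℂ g I x y (hU hx)

theorem Convention.lieIter_eq_bot_or (hconv : Convention g V) (i : Fin k) (n : ℕ) :
    lieIter (V i) n = ⊥ ∨ ∃ q, lieIter (V i) n = V q := by
  induction n with
  | zero => exact .inr ⟨i, rfl⟩
  | succ n ih =>
    rcases ih with h | ⟨j, h⟩ <;> rw [lieIter, h]
    · exact .inl (lieSpan2_bot_right _)
    · exact or_iff_not_imp_left.2 fun hne => (hconv i j hne).exists

variable [LieModule.IsNilpotent I g]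

theorem iSup_lieIter_eq (hU : U ≤ I.toSubmodule)
    (hgen : I.toSubmodule ≤ U ⊔ lieSpan2 g I.toSubmodule I.toSubmodule) :
    ⨆ n, lieIter U n = I.toSubmodule := by
  set P := ⨆ n, lieIter U n
  have hP : lieSpan2 g P P ≤ P := by
    simp only [P, lieSpan2_iSup_right, lieSpan2_comm (⨆ n, lieIter U n)]
    exact iSup₂_le fun m n => (lieSpan2_lieIter_le m n).trans (le_iSup (lieIter U) _)
  refine le_antisymm (iSup_le (lieIter_le hU)) ?_
  have hlcs (n : ℕ) : I.toSubmodule ≤ P ⊔ (I.lcs g n).toSubmodule := by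
    induction n with
    | zero => exact le_top.trans le_sup_right
    | succ n ih =>
      have hbracket (B : Submodule ℂ g) (hB : B ≤ I.toSubmodule) :
          lieSpan2 g B (I.lcs g n).toSubmodule ≤ P ⊔ (I.lcs g (n + 1)).toSubmodule := by
        rw [LieIdeal.lcs_succ, ← lieSpan2_toSubmodule]
        exact (lieSpan2_mono hB le_rfl).trans le_sup_right
      have hIP : lieSpan2 g P I.toSubmodule ≤ P ⊔ (I.lcs g (n + 1)).toSubmodule := by
        refine (lieSpan2_mono le_rfl ih).trans ?_
        rw [lieSpan2_sup_right]
        exact sup_le (hP.trans le_sup_left) (hbracket P (iSup_le (lieIter_le hU)))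
      refine hgen.trans (sup_le ((le_iSup (lieIter U) 0).trans le_sup_left) ?_)
      refine (lieSpan2_mono le_rfl ih).trans ?_
      rw [lieSpan2_sup_right, lieSpan2_comm]
      exact sup_le hIP (hbracket _ le_rfl)
  obtain ⟨n, hn⟩ := (LieModule.isNilpotent_iff ℂ I g).1 ‹_›
  refine (hlcs n).trans (sup_le le_rfl ?_)
  rw [LieIdeal.coe_lcs_eq, hn]
  exact bot_le

theorem lieIter_eq_bot_of_eq (hU : U ≤ I.toSubmodule) {m n : ℕ} (hmn : m < n)
    (h : lieIter U m = lieIter U n) : lieIter U m = ⊥ := by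
  set P := ⨆ t, lieIter U (m + t)
  have hstep (t : ℕ) : lieIter U (m + t + 1) ≤ lieSpan2 g I.toSubmodule P :=
    lieSpan2_mono hU (le_iSup (fun t => lieIter U (m + t)) t)
  have hP : P ≤ lieSpan2 g I.toSubmodule P := by
    refine iSup_le fun t => ?_
    cases t with
    | zero =>
      obtain ⟨d, rfl⟩ := Nat.exists_eq_add_of_lt hmn
      exact h.trans_le (hstep d)
    | succ t => exact hstep t
  exact eq_bot_mono (le_iSup (fun t => lieIter U (m + t)) 0) (eq_bot_of_le_lieSpan2 hP)

theorem Convention.iSupIndep_lieIter (hconv : Convention g V) (hV : iSupIndep V) {i : Fin k}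
    (hi : V i ≤ I.toSubmodule) : iSupIndep (lieIter (V i)) := by
  rw [← iSupIndep_ne_bot]
  choose f hf using fun n : {n // lieIter (V i) n ≠ ⊥} =>
    (hconv.lieIter_eq_bot_or i n).resolve_left n.2
  have hf_inj : Function.Injective f := by
    intro m n hmn
    have heq : lieIter (V i) m = lieIter (V i) n := by rw [hf, hf, hmn]
    rcases lt_trichotomy (m : ℕ) n with hlt | h | hlt
    · exact absurd (lieIter_eq_bot_of_eq hi hlt heq) m.2
    · exact Subtype.ext h
    · exact absurd (lieIter_eq_bot_of_eq hi hlt heq.symm) n.2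
  rw [funext hf]
  exact hV.comp hf_inj

theorem not_radical_le_sup_derivedRad [FiniteDimensional ℂ g]
    [LieModule.IsNilpotent (LieAlgebra.radical ℂ g) g]
    (hinn : ∀ D : LieDerivation ℂ g g, IsInnerDer D) {s : LieSubalgebra ℂ g}
    (hcompl : IsCompl s.toSubmodule (LieAlgebra.radical ℂ g).toSubmodule)
    (hdec : IsDecomp g s V) (hconv : Convention g V) (i : Fin k) :
    ¬ (LieAlgebra.radical ℂ g).toSubmodule ≤ V i ⊔ derivedRad g := by
  intro hgen
  have hi : V i ≤ (LieAlgebra.radical ℂ g).toSubmodule := hdec.2.2 ▸ le_iSup V i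
  have hinv (n : ℕ) : Invariant g s (lieIter (V i) n) := by
    induction n with
    | zero => exact (hdec.1 i).2.1
    | succ n ih => exact (hdec.1 i).2.1.lieSpan2 ih
  have := (isGrading_lieIter (V i)).weight_eq_zero hinn hcompl
    (hconv.iSupIndep_lieIter hdec.2.1 hi) (iSup_lieIter_eq hi hgen) hinv (i := 0) (hdec.1 i).1
  norm_num at this

end SingleGenerator

section Counting

variable {g : Type*} [LieRing g] [LieAlgebra ℂ g] {k : ℕ} {V : Fin k → Submodule ℂ g}

theorem lieSpan2_finset_sup_right {ι : Type*} (A : Submodule ℂ g) (S : Finset ι)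
    (B : ι → Submodule ℂ g) : lieSpan2 g A (S.sup B) = S.sup fun i => lieSpan2 g A (B i) := by
  simp only [Finset.sup_eq_iSup, lieSpan2_iSup_right]

theorem Convention.exists_lieSpan2_sup_eq (hconv : Convention g V) (S T : Finset (Fin k)) :
    ∃ U : Finset (Fin k), lieSpan2 g (S.sup V) (T.sup V) = U.sup V := by
  have hpair (i j : Fin k) : ∃ U : Finset (Fin k), lieSpan2 g (V i) (V j) = U.sup V := by
    by_cases h : lieSpan2 g (V i) (V j) = ⊥
    · exact ⟨∅, h⟩
    · obtain ⟨q, hq, -⟩ := hconv i j h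
      exact ⟨{q}, by rw [hq, Finset.sup_singleton]⟩
  choose U hU using hpair
  refine ⟨T.biUnion fun j => S.biUnion fun i => U j i, ?_⟩
  rw [lieSpan2_finset_sup_right, Finset.sup_biUnion]
  refine Finset.sup_congr rfl fun j _ => ?_
  simp only [Finset.sup_biUnion, ← hU, lieSpan2_finset_sup_right, lieSpan2_comm (S.sup V)]

variable [FiniteDimensional ℂ g] [LieModule.IsNilpotent (LieAlgebra.radical ℂ g) g]
  {s : LieSubalgebra ℂ g}

theorem exists_finset_derivedRad_eq (hinn : ∀ D : LieDerivation ℂ g g, IsInnerDer D)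
    (hcompl : IsCompl s.toSubmodule (LieAlgebra.radical ℂ g).toSubmodule)
    (hdec : IsDecomp g s V) (hconv : Convention g V) [NeZero k] :
    ∃ S T : Finset (Fin k), derivedRad g = S.sup V ∧
      lieSpan2 g (LieAlgebra.radical ℂ g).toSubmodule (derivedRad g) = T.sup V ∧
      T.Nonempty ∧ T ⊂ S ∧ S.card + 2 ≤ k := by
  have hR : (LieAlgebra.radical ℂ g).toSubmodule = Finset.univ.sup V := by
    rw [← hdec.2.2, Finset.sup_univ_eq_iSup]
  have hrad : (LieAlgebra.radical ℂ g).toSubmodule ≠ ⊥ := fun h =>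
    (hdec.1 0).1 (eq_bot_mono (le_iSup V 0) (hdec.2.2.trans h))
  have hne := lieSpan2_derivedRad_ne_bot hinn hcompl hdec hrad
  obtain ⟨S, hS⟩ : ∃ S : Finset (Fin k), derivedRad g = S.sup V := by
    rw [derivedRad, hR]
    exact hconv.exists_lieSpan2_sup_eq _ _
  obtain ⟨T, hT⟩ : ∃ T : Finset (Fin k),
      lieSpan2 g (LieAlgebra.radical ℂ g).toSubmodule (derivedRad g) = T.sup V := by
    rw [hS, hR]
    exact hconv.exists_lieSpan2_sup_eq _ _
  refine ⟨S, T, hS, hT, ?_, ?_, ?_⟩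
  · rw [Finset.nonempty_iff_ne_empty]
    rintro rfl
    exact hne hT
  · refine Finset.ssubset_iff_subset_ne.2 ⟨fun i hi => ?_, ?_⟩
    · refine (((iSupIndep_iff_supIndep_univ.1 hdec.2.1).le_sup_iff (Finset.subset_univ S)
        (Finset.mem_univ i) fun i => (hdec.1 i).1).1 ?_)
      rw [← hS]
      exact (Finset.le_sup hi).trans (hT.ge.trans (lieSpan2_mono le_rfl derivedRad_le_radical))
    · rintro rfl
      rw [eq_bot_of_le_lieSpan2 (hS.trans hT.symm).le, lieSpan2_bot_right] at hne
      exact hne rfl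
  · by_contra! hlt
    obtain ⟨i, hi⟩ := Finset.card_le_one_iff_subset_singleton.1
      (show Sᶜ.card ≤ 1 by rw [Finset.card_compl, Fintype.card_fin]; omega)
    refine not_radical_le_sup_derivedRad hinn hcompl hdec hconv i ?_
    rw [hR, hS, ← Finset.sup_singleton (f := V) (b := i), ← Finset.sup_union]
    refine Finset.sup_mono fun j _ => ?_
    rw [← compl_compl S, Finset.mem_union, Finset.mem_compl]
    exact (em (j ∈ Sᶜ)).imp_left fun h => hi h

end Counting

section FourModules

variable {g : Type*} [LieRing g] [LieAlgebra ℂ g]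
  [LieModule.IsNilpotent (LieAlgebra.radical ℂ g) g] {s : LieSubalgebra ℂ g}

theorem IsIrreducibleSMod.le_centerRad {W : Submodule ℂ g} (hW : IsIrreducibleSMod g s W)
    (hWR : W ≤ (LieAlgebra.radical ℂ g).toSubmodule)
    (hlie : lieSpan2 g (LieAlgebra.radical ℂ g).toSubmodule W ≤ W) : W ≤ centerRad g := by
  refine le_centerRad_iff.2 ⟨hWR, ?_⟩
  refine (hW.2.2 _ hlie ((invariant_toSubmodule _).lieSpan2 hW.2.1)).resolve_right fun h => ?_
  exact hW.1 (eq_bot_of_le_lieSpan2 h.ge)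

variable [FiniteDimensional ℂ g]

theorem exists_derivedRad_eq_sup (hinn : ∀ D : LieDerivation ℂ g g, IsInnerDer D)
    (hcompl : IsCompl s.toSubmodule (LieAlgebra.radical ℂ g).toSubmodule)
    {V : Fin 4 → Submodule ℂ g} (hdec : IsDecomp g s V) (hconv : Convention g V) :
    ∃ p q, p ≠ q ∧ derivedRad g = V p ⊔ V q ∧
      lieSpan2 g (LieAlgebra.radical ℂ g).toSubmodule (derivedRad g) = V q := by
  obtain ⟨S, T, hS, hT, hT0, hTS, hcard⟩ := exists_finset_derivedRad_eq hinn hcompl hdec hconv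
  have hlt := Finset.card_lt_card hTS
  have hpos := hT0.card_pos
  obtain ⟨q, rfl⟩ := Finset.card_eq_one.1 (show T.card = 1 by omega)
  obtain ⟨p, hpq, rfl⟩ := Finset.exists_eq_insert_iff.2
    ⟨hTS.subset, show ({q} : Finset (Fin 4)).card + 1 = S.card by omega⟩
  rw [Finset.sup_insert, Finset.sup_singleton] at hS
  rw [Finset.sup_singleton] at hT
  exact ⟨p, q, Finset.notMem_singleton.1 hpq, hS, hT⟩

theorem centerRad_eq_of_derivedRad_eq_sup (hinn : ∀ D : LieDerivation ℂ g g, IsInnerDer D)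
    (hcompl : IsCompl s.toSubmodule (LieAlgebra.radical ℂ g).toSubmodule) {k : ℕ}
    {V : Fin k → Submodule ℂ g} (hdec : IsDecomp g s V) {p q : Fin k}
    (hD : derivedRad g = V p ⊔ V q)
    (hq : lieSpan2 g (LieAlgebra.radical ℂ g).toSubmodule (derivedRad g) = V q) :
    centerRad g = V q := by
  have hVR (i : Fin k) : V i ≤ (LieAlgebra.radical ℂ g).toSubmodule := hdec.2.2 ▸ le_iSup V i
  have hqD : V q ≤ derivedRad g := le_sup_right.trans hD.ge
  have hqZ : V q ≤ centerRad g :=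
    (hdec.1 q).le_centerRad (hVR q) ((lieSpan2_mono le_rfl hqD).trans hq.le)
  have hpZ : centerRad g ⊓ V p = ⊥ := by
    refine ((hdec.1 p).2.2 _ inf_le_right
      (invariant_centerRad.inf (hdec.1 p).2.1)).resolve_right fun h => (hdec.1 q).1 ?_
    have hDZ : derivedRad g ≤ centerRad g := hD.trans_le (sup_le (inf_eq_right.1 h) hqZ)
    rw [← hq, (le_centerRad_iff.1 hDZ).2]
  have hZD := centerRad_le_derivedRad hinn hcompl hdec
  rw [← inf_eq_left.2 (hZD.trans hD.le), ← inf_sup_assoc_of_le _ hqZ, hpZ, bot_sup_eq]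

end FourModules

end Symp

theorem stmt9_general (g : Type*) [LieRing g] [LieAlgebra ℂ g] [FiniteDimensional ℂ g]
    (hperf : Symp.IsPerfectLie g) (hinn : ∀ D : LieDerivation ℂ g g, Symp.IsInnerDer D)
    (s : LieSubalgebra ℂ g) (hcompl : IsCompl s.toSubmodule (LieAlgebra.radical ℂ g).toSubmodule)
    (V : Fin 4 → Submodule ℂ g) (hdec : Symp.IsDecomp g s V) (hconv : Symp.Convention g V) :
    ∃ e : Equiv.Perm (Fin 4),
      Symp.derivedRad g = V (e 2) ⊔ V (e 3) ∧ Symp.centerRad g = V (e 3) := by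
  have : LieModule.IsNilpotent (LieAlgebra.radical ℂ g) g :=
    Symp.isNilpotent_of_top_lie_eq_self (Symp.top_lie_eq_self_of_isCompl hperf hcompl)
  obtain ⟨p, q, hpq, hD, hq⟩ := Symp.exists_derivedRad_eq_sup hinn hcompl hdec hconv
  have hZ := Symp.centerRad_eq_of_derivedRad_eq_sup hinn hcompl hdec hD hq
  obtain ⟨e, rfl, rfl⟩ := MulAction.is_two_pretransitive_iff.1
    (Equiv.Perm.isMultiplyPretransitive (Fin 4) 2) (show (2 : Fin 4) ≠ 3 by decide) hpq
  exact ⟨e, hD, hZ⟩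

/-- for a sympathetic Lie algebra whose radical decomposes into 4 simple
modules satisfying the convention, the modules may be labeled `V_n, V_m, V_p, V_k` so that
`[h,h] = V_p ⊕ V_k` and `Z(h) = V_k`. -/
theorem stmt9 (g : Type*) [LieRing g] [LieAlgebra ℂ g] [FiniteDimensional ℂ g]
    (hsymp : Symp.IsSympathetic g)
    (s : LieSubalgebra ℂ g) (hs : Symp.IsSimpleLevi g s)
    (V : Fin 4 → Submodule ℂ g) (hdec : Symp.IsDecomp g s V)
    (hconv : Symp.Convention g V) :
    ∃ e : Equiv.Perm (Fin 4),
      Symp.derivedRad g = V (e 2) ⊔ V (e 3) ∧ Symp.centerRad g = V (e 3) :=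
  stmt9_general g hsymp.2.1 hsymp.2.2 s hs.2 V hdec hconv
end
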